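/- arXiv:0911.0233 — 5 statements merged into one kernel-verified Lean document; each statement's English description precedes it below -/
import Mathlib

section
/- There exist a constant ε_0 > 0 and N_0 ∈ ℕ such that for every integer N ≥ N_0, setting K := N^{ε_0}, the Lebesgue measure of the set E := { t ∈ [0,1] : the Lebesgue measure of { s ∈ ℝ : max_{0 ≤ n ≤ N} f_{n,t}(s) ≥ K } is at most K^{-3} } is less than N^{-ε_0}. -/
open MeasureTheory

/-- The weight `w(0)=0, w(1)=t, w(2)=1`. -/
noncomputable def wgt (t : ℝ) : Fin 3 → ℝ := ![0, t, 1]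

open scoped Classical in
/-- The projection multiplicity function `f_{n,t}(s)`: the number of digit strings
`a ∈ {0,1,2}^n` with `|s - ∑_{k=1}^n w(a_k) 3^{-k}| ≤ 3^{-n}`. -/
noncomputable def multFn (t : ℝ) (n : ℕ) (s : ℝ) : ℕ :=
  (Finset.univ.filter (fun a : Fin n → Fin 3 =>
    |s - ∑ k : Fin n, wgt t (a k) * (3 : ℝ) ^ (-(k.1 + 1 : ℤ))| ≤ (3 : ℝ) ^ (-(n : ℤ)))).card

/-- `max_{0 ≤ n ≤ N} f_{n,t}(s)`. -/
noncomputable def multFnStar (t : ℝ) (N : ℕ) (s : ℝ) : ℕ :=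
  (Finset.range (N + 1)).sup fun n => multFn t n s


namespace BD

noncomputable def cpt (t : ℝ) {n : ℕ} (a : Fin n → Fin 3) : ℝ :=
  ∑ k : Fin n, wgt t (a k) * (3 : ℝ) ^ (-(k.1 + 1 : ℤ))

lemma wgt_nonneg {t : ℝ} (h0 : 0 ≤ t) (i : Fin 3) : 0 ≤ wgt t i := by
  fin_cases i <;> simp [wgt, h0]

lemma wgt_le {t : ℝ} (h1 : t ≤ 1) (i : Fin 3) : wgt t i ≤ 1 := by
  fin_cases i <;> simp [wgt, h1]

lemma zpow_eq (k : ℕ) : (3:ℝ) ^ (-(k + 1 : ℤ)) = 1 / 3 ^ (k+1) := by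
  rw [zpow_neg, one_div]; norm_cast

lemma zpow_eq' (k : ℕ) : (3:ℝ) ^ (-(k : ℤ)) = 1 / 3 ^ k := by
  rw [zpow_neg, one_div]; norm_cast

lemma cpt_append (t : ℝ) {k l : ℕ} (b : Fin k → Fin 3) (a : Fin l → Fin 3) :
    cpt t (Fin.append b a) = cpt t b + cpt t a / 3 ^ k := by
  unfold cpt
  rw [Fin.sum_univ_add]
  congr 1
  · simp
  · rw [Finset.sum_div]
    apply Finset.sum_congr rfl
    intro i _
    rw [Fin.append_right, zpow_eq, zpow_eq, Fin.val_natAdd]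
    field_simp
    ring

lemma cpt_nonneg {t : ℝ} (h0 : 0 ≤ t) {n : ℕ} (a : Fin n → Fin 3) : 0 ≤ cpt t a :=
  Finset.sum_nonneg fun i _ => mul_nonneg (wgt_nonneg h0 _) (by positivity)

lemma cpt_le {t : ℝ} (h1 : t ≤ 1) {n : ℕ} (a : Fin n → Fin 3) :
    cpt t a ≤ (1 - 1 / 3 ^ n) / 2 := by
  have : cpt t a ≤ ∑ k : Fin n, 1 * (3 : ℝ) ^ (-(k.1 + 1 : ℤ)) :=
    Finset.sum_le_sum fun i _ => mul_le_mul_of_nonneg_right (wgt_le h1 _) (by positivity)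
  refine this.trans (le_of_eq ?_)
  simp only [zpow_eq, one_mul]
  rw [Fin.sum_univ_eq_sum_range (fun k => (1:ℝ) / 3 ^ (k+1)) n]
  induction n with
  | zero => simp
  | succ n ih =>
    have := ih (fun i => a i.castSucc) (by
      refine (Finset.sum_le_sum fun i _ => mul_le_mul_of_nonneg_right (wgt_le h1 _) (by positivity)))
    rw [Finset.sum_range_succ, this]
    field_simp
    ring

open scoped Classical in
lemma multFn_eq (t : ℝ) (n : ℕ) (s : ℝ) : multFn t n s =
    ∑ a : Fin n → Fin 3, if |s - cpt t a| ≤ 1 / 3 ^ n then 1 else 0 := by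
  unfold multFn
  rw [Finset.card_filter]
  simp only [zpow_eq']
  rfl

lemma sum_append {M : Type*} [AddCommMonoid M] (k l : ℕ) (g : (Fin (k+l) → Fin 3) → M) :
    ∑ a, g a = ∑ b : Fin k → Fin 3, ∑ a : Fin l → Fin 3, g (Fin.append b a) := by
  rw [← Fintype.sum_prod_type', ← (Fin.appendEquiv k l).sum_comp]
  rfl

lemma multFn_add (t : ℝ) (k l : ℕ) (s : ℝ) : multFn t (k+l) s =
    ∑ b : Fin k → Fin 3, multFn t l (3 ^ k * (s - cpt t b)) := by
  rw [multFn_eq, sum_append]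
  apply Finset.sum_congr rfl
  intro b _
  rw [multFn_eq]
  apply Finset.sum_congr rfl
  intro a _
  congr 1
  rw [cpt_append]
  have : 3 ^ k * (s - cpt t b) - cpt t a = 3 ^ k * (s - (cpt t b + cpt t a / 3 ^ k)) := by
    field_simp; ring
  rw [this, abs_mul, abs_of_pos (by positivity : (0:ℝ) < 3^k), pow_add]
  have h3 : (0:ℝ) < 3 ^ k := by positivity
  have h4 : (1:ℝ) / 3 ^ l = 3 ^ k * (1 / (3 ^ k * 3 ^ l)) := by field_simp
  rw [h4, mul_le_mul_iff_right₀ h3]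

lemma multFn_supp {t : ℝ} (h0 : 0 ≤ t) (h1 : t ≤ 1) (l : ℕ) (u : ℝ) (h : multFn t l u ≠ 0) :
    |u| ≤ 1 := by
  rw [multFn_eq] at h
  obtain ⟨a, _, ha⟩ := Finset.exists_ne_zero_of_sum_ne_zero h
  have ha' : |u - cpt t a| ≤ 1 / 3 ^ l := by
    by_contra hh; exact ha (if_neg hh)
  have e0 := cpt_nonneg h0 a
  have e1 := cpt_le h1 a
  have e2 : (1:ℝ) / 3 ^ l ≤ 1 := by
    rw [div_le_one (by positivity)]; exact one_le_pow₀ (by norm_num)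
  rw [abs_le] at *
  constructor <;> linarith

def near (k : ℕ) (c s : ℝ) : Prop := |⌊3 ^ k * c⌋ - ⌊3 ^ k * s⌋| ≤ 1

lemma floor_near {x y : ℝ} (h : |x - y| ≤ 1) : |⌊x⌋ - ⌊y⌋| ≤ 1 := by
  rw [abs_le] at *
  have a := Int.floor_le x
  have b := Int.floor_le y
  have c := Int.lt_floor_add_one x
  have d := Int.lt_floor_add_one y
  constructor
  · have : (⌊y⌋ : ℝ) < ⌊x⌋ + 2 := by linarith
    have : ⌊y⌋ < ⌊x⌋ + 2 := by exact_mod_cast this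
    omega
  · have : (⌊x⌋ : ℝ) < ⌊y⌋ + 2 := by linarith
    have : ⌊x⌋ < ⌊y⌋ + 2 := by exact_mod_cast this
    omega

lemma near_of {k : ℕ} {c s : ℝ} (h : |3 ^ k * (s - c)| ≤ 1) : near k c s := by
  unfold near
  apply floor_near
  rw [abs_sub_comm, ← mul_sub]; exact h

open scoped Classical in
noncomputable def nu (t : ℝ) (k : ℕ) (i : ℤ) : ℕ :=
  (Finset.univ.filter (fun a : Fin k → Fin 3 => ⌊3 ^ k * cpt t a⌋ = i)).card

open scoped Classical in
noncomputable def G (t : ℝ) (k : ℕ) (s : ℝ) : ℕ :=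
  (Finset.univ.filter (fun a : Fin k → Fin 3 => near k (cpt t a) s)).card

lemma G_le_nu (t : ℝ) (k : ℕ) (s : ℝ) :
    G t k s ≤ nu t k (⌊3 ^ k * s⌋ + (-1)) + nu t k (⌊3 ^ k * s⌋ + 0) + nu t k (⌊3 ^ k * s⌋ + 1) := by
  classical
  unfold G nu
  refine le_trans ?_ (Nat.add_le_add_right (Finset.card_union_le _ _) _)
  refine le_trans ?_ (Finset.card_union_le _ _)
  apply Finset.card_le_card
  intro a
  simp only [Finset.mem_filter, Finset.mem_union, Finset.mem_univ, true_and, near, abs_le]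
  intro h
  omega

lemma multFn_le_G (t : ℝ) (k : ℕ) (s : ℝ) : multFn t k s ≤ G t k s := by
  classical
  rw [multFn_eq, ← Finset.card_filter]
  unfold G
  apply Finset.card_le_card
  intro a
  simp only [Finset.mem_filter, Finset.mem_univ, true_and]
  intro h
  apply near_of
  rw [abs_mul, abs_of_pos (by positivity : (0:ℝ) < 3^k)]
  calc _ ≤ (3:ℝ)^k * (1 / 3 ^ k) := by gcongr
    _ = 1 := by field_simp

lemma nu_le_multFn (t : ℝ) (k : ℕ) (s : ℝ) : nu t k ⌊3 ^ k * s⌋ ≤ multFn t k s := by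
  classical
  rw [multFn_eq, ← Finset.card_filter]
  unfold nu
  apply Finset.card_le_card
  intro a
  simp only [Finset.mem_filter, Finset.mem_univ, true_and]
  intro h
  have := Int.abs_sub_lt_one_of_floor_eq_floor h
  rw [← mul_sub, abs_mul, abs_of_pos (by positivity : (0:ℝ) < 3^k), abs_sub_comm] at this
  rw [le_div_iff₀ (by positivity)]
  linarith

lemma G_succ_le {t : ℝ} (h0 : 0 ≤ t) (h1 : t ≤ 1) (k : ℕ) (s : ℝ) :
    G t (k+1) s ≤ 3 * G t k s := by
  classical
  unfold G
  rw [Finset.card_filter, sum_append, Finset.card_filter, Finset.mul_sum]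
  apply Finset.sum_le_sum
  intro b _
  by_cases hb : near k (cpt t b) s
  · rw [if_pos hb]
    refine (Finset.sum_le_card_nsmul _ _ 1 ?_).trans ?_
    · intro a _; split_ifs <;> simp
    · simp
  · rw [if_neg hb, mul_zero]
    apply le_of_eq
    apply Finset.sum_eq_zero
    intro a _
    rw [if_neg]
    intro h
    apply hb
    apply near_of
    rw [cpt_append] at h
    unfold near at h
    have e0 := cpt_nonneg h0 a
    have e1 : cpt t a ≤ 1/3 := by
      have := cpt_le h1 a; norm_num at this ⊢; linarith
    have f1 := Int.floor_le (3 ^ (k+1) * (cpt t b + cpt t a / 3 ^ k))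
    have f2 := Int.lt_floor_add_one (3 ^ (k+1) * (cpt t b + cpt t a / 3 ^ k))
    have f3 := Int.floor_le (3 ^ (k+1) * s)
    have f4 := Int.lt_floor_add_one (3 ^ (k+1) * s)
    have f5 : (3:ℝ) ^ (k+1) * (cpt t b + cpt t a / 3 ^ k) = 3 * (3 ^ k * cpt t b) + 3 * cpt t a := by
      field_simp; ring
    have f6 : (3:ℝ) ^ (k+1) * s = 3 * (3 ^ k * s) := by ring
    have h' : |((⌊(3:ℝ) ^ (k+1) * (cpt t b + cpt t a / 3 ^ k)⌋ - ⌊(3:ℝ) ^ (k+1) * s⌋ : ℤ) : ℝ)| ≤ 1 := by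
      exact_mod_cast h
    push_cast at h'
    rw [abs_le] at h' ⊢
    obtain ⟨g1, g2⟩ := h'
    constructor <;> linarith

lemma floor_coarse (s s' : ℝ) (j k : ℕ) (hjk : j ≤ k) (h : ⌊(3:ℝ) ^ k * s⌋ = ⌊(3:ℝ) ^ k * s'⌋) :
    ⌊(3:ℝ) ^ j * s⌋ = ⌊(3:ℝ) ^ j * s'⌋ := by
  have key : ∀ s s' : ℝ, ⌊(3:ℝ) ^ k * s⌋ = ⌊(3:ℝ) ^ k * s'⌋ → ⌊(3:ℝ) ^ j * s⌋ ≤ ⌊(3:ℝ) ^ j * s'⌋ := by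
    intro s s' h
    obtain ⟨d, rfl⟩ := Nat.exists_eq_add_of_le hjk
    apply Int.le_floor.2
    have a := Int.floor_le ((3:ℝ)^j * s)
    have h3 : (0:ℝ) < 3 ^ d := by positivity
    have b : (3 ^ d * ⌊(3:ℝ) ^ j * s⌋ : ℤ) ≤ ⌊(3:ℝ) ^ (j+d) * s⌋ := by
      apply Int.le_floor.2
      push_cast
      rw [pow_add]; nlinarith
    rw [h] at b
    have c := Int.le_floor.1 b
    push_cast at c
    rw [pow_add] at c
    have : (3:ℝ)^d * ⌊(3:ℝ) ^ j * s⌋ ≤ 3^d * (3 ^ j * s') := by linarith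
    exact le_of_mul_le_mul_left this h3
  exact le_antisymm (key _ _ h) (key _ _ h.symm)

def T (t : ℝ) (N κ : ℕ) (k : ℕ) : Set ℝ := {s | k ≤ N ∧ κ ≤ nu t k ⌊3 ^ k * s⌋}
def U (t : ℝ) (N κ : ℕ) (k : ℕ) : Set ℝ :=
  {s | ∃ δ : ℤ, |δ| ≤ 1 ∧ k ≤ N ∧ κ ≤ nu t k (⌊3 ^ k * s⌋ + δ)}
def W (t : ℝ) (N κ : ℕ) (k : ℕ) : Set ℝ := {s | s ∈ T t N κ k ∧ ∀ j < k, s ∉ T t N κ j}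
def V (t : ℝ) (N κ : ℕ) (k : ℕ) : Set ℝ := {s | s ∈ U t N κ k ∧ ∀ j < k, s ∉ U t N κ j}

lemma meas_floor (k : ℕ) : Measurable (fun s : ℝ => ⌊(3:ℝ) ^ k * s⌋) :=
  Int.measurable_floor.comp (measurable_const_mul _)

lemma meas_T (t : ℝ) (N κ k : ℕ) : MeasurableSet (T t N κ k) :=
  meas_floor k (MeasurableSet.of_discrete (s := {i : ℤ | k ≤ N ∧ κ ≤ nu t k i}))

lemma meas_U (t : ℝ) (N κ k : ℕ) : MeasurableSet (U t N κ k) :=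
  meas_floor k (MeasurableSet.of_discrete
    (s := {i : ℤ | ∃ δ : ℤ, |δ| ≤ 1 ∧ k ≤ N ∧ κ ≤ nu t k (i + δ)}))

lemma meas_W (t : ℝ) (N κ k : ℕ) : MeasurableSet (W t N κ k) := by
  have : W t N κ k = T t N κ k ∩ ⋂ j, ⋂ (_ : j < k), (T t N κ j)ᶜ := by
    ext s; simp [W]
  rw [this]
  exact (meas_T _ _ _ _).inter
    (MeasurableSet.iInter fun j => MeasurableSet.iInter fun _ => (meas_T _ _ _ _).compl)

lemma meas_V (t : ℝ) (N κ k : ℕ) : MeasurableSet (V t N κ k) := by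
  have : V t N κ k = U t N κ k ∩ ⋂ j, ⋂ (_ : j < k), (U t N κ j)ᶜ := by
    ext s; simp [V]
  rw [this]
  exact (meas_U _ _ _ _).inter
    (MeasurableSet.iInter fun j => MeasurableSet.iInter fun _ => (meas_U _ _ _ _).compl)

lemma T_congr {t : ℝ} {N κ j k : ℕ} (hjk : j ≤ k) {s s' : ℝ}
    (h : ⌊(3:ℝ) ^ k * s⌋ = ⌊(3:ℝ) ^ k * s'⌋) : s ∈ T t N κ j ↔ s' ∈ T t N κ j := by
  unfold T; simp only [Set.mem_ofPred_eq]; rw [floor_coarse s s' j k hjk h]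

lemma U_congr {t : ℝ} {N κ j k : ℕ} (hjk : j ≤ k) {s s' : ℝ}
    (h : ⌊(3:ℝ) ^ k * s⌋ = ⌊(3:ℝ) ^ k * s'⌋) : s ∈ U t N κ j ↔ s' ∈ U t N κ j := by
  unfold U; simp only [Set.mem_ofPred_eq]; rw [floor_coarse s s' j k hjk h]

lemma W_congr {t : ℝ} {N κ k : ℕ} {s s' : ℝ}
    (h : ⌊(3:ℝ) ^ k * s⌋ = ⌊(3:ℝ) ^ k * s'⌋) (hs : s ∈ W t N κ k) : s' ∈ W t N κ k :=
  ⟨(T_congr le_rfl h).1 hs.1, fun j hj hh => hs.2 j hj ((T_congr hj.le h).2 hh)⟩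

lemma V_congr {t : ℝ} {N κ k : ℕ} {s s' : ℝ}
    (h : ⌊(3:ℝ) ^ k * s⌋ = ⌊(3:ℝ) ^ k * s'⌋) (hs : s ∈ V t N κ k) : s' ∈ V t N κ k :=
  ⟨(U_congr le_rfl h).1 hs.1, fun j hj hh => hs.2 j hj ((U_congr hj.le h).2 hh)⟩

lemma floor_add_shift (k : ℕ) (s : ℝ) (δ : ℤ) : ⌊(3:ℝ) ^ k * (s + δ / 3 ^ k)⌋ = ⌊(3:ℝ) ^ k * s⌋ + δ := by
  rw [← Int.floor_add_intCast]
  congr 1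
  field_simp

lemma U_sub (t : ℝ) (N κ k : ℕ) : U t N κ k ⊆ ⋃ j, ⋃ δ ∈ ({-1, 0, 1} : Finset ℤ),
    (fun s : ℝ => s + δ / 3 ^ j) ⁻¹' (W t N κ j) := by
  classical
  rintro s ⟨δ, hδ, hk, hn⟩
  have hT : s + δ / 3 ^ k ∈ T t N κ k := ⟨hk, by rw [floor_add_shift]; exact hn⟩
  have hex : ∃ j, s + (δ:ℝ) / 3 ^ k ∈ T t N κ j := ⟨k, hT⟩
  let j := Nat.find hex
  have hj : s + (δ:ℝ) / 3 ^ k ∈ T t N κ j := Nat.find_spec hex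
  have hjk : j ≤ k := Nat.find_min' hex hT
  have hW : s + (δ:ℝ) / 3 ^ k ∈ W t N κ j := ⟨hj, fun i hi => Nat.find_min hex hi⟩
  have hf : |⌊(3:ℝ) ^ j * (s + δ / 3 ^ k)⌋ - ⌊(3:ℝ) ^ j * s⌋| ≤ 1 := by
    apply floor_near
    have : (3:ℝ) ^ j * (s + δ / 3 ^ k) - 3 ^ j * s = (3 ^ j / 3 ^ k) * δ := by ring
    rw [this, abs_mul, abs_of_pos (by positivity)]
    have h1 : (3:ℝ) ^ j / 3 ^ k ≤ 1 := by
      rw [div_le_one (by positivity)]; exact pow_le_pow_right₀ (by norm_num) hjk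
    have h2 : |(δ:ℝ)| ≤ 1 := by exact_mod_cast hδ
    have h3 : (0:ℝ) ≤ 3 ^ j / 3 ^ k := by positivity
    nlinarith [abs_nonneg (δ:ℝ)]
  simp only [Set.mem_iUnion]
  refine ⟨j, ⌊(3:ℝ) ^ j * (s + δ / 3 ^ k)⌋ - ⌊(3:ℝ) ^ j * s⌋, ?_, ?_⟩
  · rw [abs_le] at hf
    simp only [Finset.mem_insert, Finset.mem_singleton]
    omega
  · apply W_congr _ hW
    rw [floor_add_shift]; ring

lemma vol_U (t : ℝ) (N κ : ℕ) : volume (⋃ k, U t N κ k) ≤ 3 * volume (⋃ k, T t N κ k) := by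
  have hd : Pairwise (Function.onFun Disjoint (W t N κ)) := by
    intro i j hij
    rw [Function.onFun, Set.disjoint_left]
    intro s hi hj
    rcases lt_or_gt_of_ne hij with h | h
    · exact hj.2 i h hi.1
    · exact hi.2 j h hj.1
  calc volume (⋃ k, U t N κ k) ≤ volume (⋃ j, ⋃ δ ∈ ({-1, 0, 1} : Finset ℤ),
      (fun s : ℝ => s + δ / 3 ^ j) ⁻¹' (W t N κ j)) :=
        measure_mono (Set.iUnion_subset fun k => U_sub t N κ k)
    _ ≤ ∑' j, volume (⋃ δ ∈ ({-1, 0, 1} : Finset ℤ),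
      (fun s : ℝ => s + δ / 3 ^ j) ⁻¹' (W t N κ j)) := measure_iUnion_le _
    _ ≤ ∑' j, 3 * volume (W t N κ j) := by
        apply ENNReal.tsum_le_tsum
        intro j
        refine (measure_biUnion_finset_le _ _).trans ?_
        simp only [measure_preimage_add_right]
        rw [Finset.sum_const]
        simp
    _ = 3 * volume (⋃ j, W t N κ j) := by
        rw [ENNReal.tsum_mul_left, measure_iUnion hd (meas_W t N κ)]
    _ ≤ _ := by
        gcongr
        exact fun s hs => hs.1

end BD

namespace BD
open scoped ENNReal

open scoped Classical in
lemma multFn_eq_ind (t : ℝ) (n : ℕ) (s : ℝ) : (multFn t n s : ℝ≥0∞) =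
    ∑ a : Fin n → Fin 3, (Set.Icc (cpt t a - 1 / 3 ^ n) (cpt t a + 1 / 3 ^ n)).indicator 1 s := by
  rw [multFn_eq]
  push_cast
  apply Finset.sum_congr rfl
  intro a _
  rw [Set.indicator_apply]
  congr 1
  rw [Set.mem_Icc, abs_le]
  apply propext
  constructor <;> rintro ⟨h1, h2⟩ <;> constructor <;> linarith

lemma meas_multFn (t : ℝ) (n : ℕ) : Measurable (fun s => (multFn t n s : ℝ≥0∞)) := by
  simp only [multFn_eq_ind]
  exact Finset.measurable_sum _ fun a _ => measurable_one.indicator measurableSet_Icc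

lemma int_multFn (t : ℝ) (n : ℕ) : ∫⁻ s, (multFn t n s : ℝ≥0∞) = 2 := by
  simp only [multFn_eq_ind]
  rw [lintegral_finsetSum _ fun a _ => measurable_one.indicator measurableSet_Icc]
  simp only [lintegral_indicator_one measurableSet_Icc, Real.volume_Icc]
  have : ∀ a : Fin n → Fin 3, cpt t a + 1 / 3 ^ n - (cpt t a - 1 / 3 ^ n) = 2 / 3 ^ n := by
    intro a; ring
  simp only [this]
  rw [Finset.sum_const, Finset.card_univ, Fintype.card_fun, Fintype.card_fin, Fintype.card_fin,
    nsmul_eq_mul, ← ENNReal.ofReal_natCast, ← ENNReal.ofReal_mul (by positivity)]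
  push_cast
  rw [mul_div_cancel₀ _ (by positivity)]
  simp

lemma scaled (g : ℝ → ℝ≥0∞) (hg : Measurable g) (k : ℕ) (c : ℝ) :
    ∫⁻ s, g (3 ^ k * (s - c)) = ENNReal.ofReal (1 / 3 ^ k) * ∫⁻ s, g s := by
  have h3 : (3:ℝ)^k ≠ 0 := by positivity
  rw [lintegral_sub_right_eq_self (fun s => g (3 ^ k * s)) c]
  rw [← lintegral_map hg (measurable_const_mul _), Real.map_volume_mul_left h3,
    lintegral_smul_measure, abs_of_pos (by positivity), one_div]
  rfl

lemma vol_cell (k : ℕ) (i : ℤ) : volume {s : ℝ | ⌊(3:ℝ) ^ k * s⌋ = i} = ENNReal.ofReal (1 / 3 ^ k) := by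
  have : {s : ℝ | ⌊(3:ℝ) ^ k * s⌋ = i} = Set.Ico ((i:ℝ) / 3 ^ k) ((i + 1) / 3 ^ k) := by
    ext s
    simp only [Set.mem_ofPred_eq, Set.mem_Ico, Int.floor_eq_iff]
    rw [div_le_iff₀ (by positivity), lt_div_iff₀ (by positivity), mul_comm s]
  rw [this, Real.volume_Ico]
  congr 1; ring

lemma V_zero {t : ℝ} {N κ : ℕ} (hκ : 2 ≤ κ) : V t N κ 0 = ∅ := by
  classical
  rw [Set.eq_empty_iff_forall_notMem]
  rintro s ⟨⟨δ, _, _, h⟩, _⟩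
  have : nu t 0 (⌊3 ^ 0 * s⌋ + δ) ≤ 1 := by
    unfold nu
    refine (Finset.card_filter_le _ _).trans ?_
    simp
  omega

lemma G_lt_of_not_U {t : ℝ} {N κ k : ℕ} (hk : k ≤ N) {s : ℝ} (h : s ∉ U t N κ k) :
    G t k s ≤ 3 * κ := by
  have h' : ∀ δ : ℤ, |δ| ≤ 1 → nu t k (⌊3 ^ k * s⌋ + δ) < κ := by
    intro δ hδ
    by_contra hc
    exact h ⟨δ, hδ, hk, by omega⟩
  have := G_le_nu t k s
  have a := h' (-1) (by simp)
  have b := h' 0 (by simp)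
  have c := h' 1 (by simp)
  omega

lemma G_le_of_V {t : ℝ} (h0 : 0 ≤ t) (h1 : t ≤ 1) {N κ k : ℕ} (hκ : 2 ≤ κ) (hk : k ≤ N) {s : ℝ}
    (h : s ∈ V t N κ k) : G t k s ≤ 9 * κ := by
  cases k with
  | zero => rw [V_zero hκ] at h; exact h.elim
  | succ k =>
    have := G_succ_le h0 h1 k s
    have := G_lt_of_not_U (by omega) (h.2 k (by omega))
    omega

lemma V_step {t : ℝ} (h0 : 0 ≤ t) (h1 : t ≤ 1) {N κ k l : ℕ} (hκ : 2 ≤ κ) (hk : k ≤ N) :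
    ∫⁻ s in V t N κ k, (multFn t (k+l) s : ℝ≥0∞)^2 ≤
      81 * (κ:ℝ≥0∞)^2 * volume (V t N κ k) * ∫⁻ s, (multFn t l s : ℝ≥0∞)^2 := by
  classical
  set L := ∫⁻ s, (multFn t l s : ℝ≥0∞)^2 with hL
  let D : (Fin k → Fin 3) → Set ℝ := fun b => {s | s ∈ V t N κ k ∧ near k (cpt t b) s}
  have hDm : ∀ b, MeasurableSet (D b) := by
    intro b
    exact (meas_V t N κ k).inter (meas_floor k (MeasurableSet.of_discrete
      (s := {i : ℤ | |⌊3 ^ k * cpt t b⌋ - i| ≤ 1})))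
  -- pointwise
  have hpt : ∀ s ∈ V t N κ k, (multFn t (k+l) s : ℝ≥0∞)^2 ≤
      9 * κ * ∑ b : Fin k → Fin 3, (D b).indicator (fun s => (multFn t l (3 ^ k * (s - cpt t b)) : ℝ≥0∞)^2) s := by
    intro s hs
    have e1 : multFn t (k+l) s = ∑ b ∈ Finset.univ.filter (fun b : Fin k → Fin 3 => near k (cpt t b) s),
        multFn t l (3 ^ k * (s - cpt t b)) := by
      rw [multFn_add, Finset.sum_filter]
      apply Finset.sum_congr rfl
      intro b _
      split_ifs with h
      · rfl
      · by_contra hne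
        exact h (near_of (multFn_supp h0 h1 l _ hne))
    have e2 : (multFn t (k+l) s)^2 ≤ 9 * κ * ∑ b ∈ Finset.univ.filter (fun b : Fin k → Fin 3 => near k (cpt t b) s),
        (multFn t l (3 ^ k * (s - cpt t b)))^2 := by
      rw [e1]
      refine sq_sum_le_card_mul_sum_sq.trans ?_
      exact Nat.mul_le_mul_right _ (G_le_of_V h0 h1 hκ hk hs)
    have e3 : ∑ b : Fin k → Fin 3, (D b).indicator (fun s => (multFn t l (3 ^ k * (s - cpt t b)) : ℝ≥0∞)^2) s
        = ((∑ b ∈ Finset.univ.filter (fun b : Fin k → Fin 3 => near k (cpt t b) s),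
        (multFn t l (3 ^ k * (s - cpt t b)))^2 : ℕ) : ℝ≥0∞) := by
      rw [Finset.sum_filter]
      push_cast
      apply Finset.sum_congr rfl
      intro b _
      rw [Set.indicator_apply]
      have : s ∈ D b ↔ near k (cpt t b) s := ⟨fun h => h.2, fun h => ⟨hs, h⟩⟩
      simp only [this]
    rw [e3]
    exact_mod_cast e2
  have hD1 : ∀ b, ∫⁻ s in D b, (multFn t l (3 ^ k * (s - cpt t b)) : ℝ≥0∞)^2 ≤ volume (D b) * L := by
    intro b
    rcases Set.eq_empty_or_nonempty (D b) with he | ⟨s, hs⟩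
    · rw [he]; simp
    · have hc : ENNReal.ofReal (1 / 3 ^ k) ≤ volume (D b) := by
        rw [← vol_cell k ⌊(3:ℝ)^k * s⌋]
        apply measure_mono
        intro s' hs'
        have hs' : ⌊(3:ℝ) ^ k * s'⌋ = ⌊(3:ℝ) ^ k * s⌋ := hs'
        refine ⟨V_congr hs'.symm hs.1, ?_⟩
        have := hs.2
        unfold near at this ⊢
        rwa [hs']
      calc _ ≤ ∫⁻ s, (multFn t l (3 ^ k * (s - cpt t b)) : ℝ≥0∞)^2 := setLIntegral_le_lintegral _ _
        _ = ENNReal.ofReal (1 / 3 ^ k) * L :=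
            scaled (fun s => (multFn t l s : ℝ≥0∞)^2) ((meas_multFn t l).pow_const 2) k _
        _ ≤ _ := by gcongr
  have hD2 : ∑ b, volume (D b) ≤ 9 * κ * volume (V t N κ k) := by
    calc ∑ b, volume (D b) = ∑ b, ∫⁻ s, (D b).indicator 1 s := by
          apply Finset.sum_congr rfl
          intro b _
          rw [lintegral_indicator_one (hDm b)]
      _ = ∫⁻ s, ∑ b, (D b).indicator 1 s := by
          rw [lintegral_finsetSum _ fun b _ => measurable_one.indicator (hDm b)]
      _ ≤ ∫⁻ s, (V t N κ k).indicator (fun _ => 9 * (κ:ℝ≥0∞)) s := by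
          apply lintegral_mono
          intro s
          by_cases hs : s ∈ V t N κ k
          · simp only [Set.indicator_of_mem hs]
            have := G_le_of_V h0 h1 hκ hk hs
            unfold G at this
            rw [Finset.card_filter] at this
            have h2 : ∑ b, (D b).indicator (1 : ℝ → ℝ≥0∞) s = ((∑ b : Fin k → Fin 3, if near k (cpt t b) s then 1 else 0 : ℕ) : ℝ≥0∞) := by
              push_cast
              apply Finset.sum_congr rfl
              intro b _
              rw [Set.indicator_apply]
              have : s ∈ D b ↔ near k (cpt t b) s := ⟨fun h => h.2, fun h => ⟨hs, h⟩⟩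
              simp only [this, Pi.one_apply]
            rw [h2]
            exact_mod_cast this
          · have : ∑ b, (D b).indicator (1 : ℝ → ℝ≥0∞) s = 0 := by
              apply Finset.sum_eq_zero
              intro b _
              exact Set.indicator_of_notMem (fun h => hs h.1) _
            simp only [this]; exact zero_le
      _ = _ := by rw [lintegral_indicator_const (meas_V t N κ k)]
  calc ∫⁻ s in V t N κ k, (multFn t (k+l) s : ℝ≥0∞)^2
      ≤ ∫⁻ s in V t N κ k, 9 * κ * ∑ b : Fin k → Fin 3, (D b).indicator (fun s => (multFn t l (3 ^ k * (s - cpt t b)) : ℝ≥0∞)^2) s :=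
        setLIntegral_mono' (meas_V t N κ k) hpt
    _ ≤ ∫⁻ s, 9 * κ * ∑ b : Fin k → Fin 3, (D b).indicator (fun s => (multFn t l (3 ^ k * (s - cpt t b)) : ℝ≥0∞)^2) s :=
        setLIntegral_le_lintegral _ _
    _ = 9 * κ * ∑ b : Fin k → Fin 3, ∫⁻ s in D b, (multFn t l (3 ^ k * (s - cpt t b)) : ℝ≥0∞)^2 := by
        have hm : ∀ b : Fin k → Fin 3, Measurable ((D b).indicator (fun s => (multFn t l (3 ^ k * (s - cpt t b)) : ℝ≥0∞)^2)) := by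
          intro b
          apply Measurable.indicator _ (hDm b)
          exact ((meas_multFn t l).comp ((measurable_id.sub_const _).const_mul _)).pow_const 2
        rw [lintegral_const_mul _ (Finset.measurable_sum _ fun b _ => hm b),
          lintegral_finsetSum _ fun b _ => hm b]
        simp only [lintegral_indicator (hDm _)]
    _ ≤ 9 * κ * ∑ b : Fin k → Fin 3, volume (D b) * L := by
        gcongr with b _
        exact hD1 b
    _ = 9 * κ * (∑ b : Fin k → Fin 3, volume (D b)) * L := by
        rw [← Finset.sum_mul]; ring
    _ ≤ 9 * κ * (9 * κ * volume (V t N κ k)) * L := by gcongr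
    _ = _ := by ring

theorem L2_bound {t : ℝ} (h0 : 0 ≤ t) (h1 : t ≤ 1) {N κ : ℕ} (hκ : 2 ≤ κ)
    (hA : 486 * (κ:ℝ≥0∞)^2 * volume (⋃ k, T t N κ k) ≤ 1) (n : ℕ) (hn : n ≤ N) :
    ∫⁻ s, (multFn t n s : ℝ≥0∞)^2 ≤ 12 * κ := by
  classical
  induction n using Nat.strong_induction_on with
  | _ n ih =>
  have hVd : Pairwise (Function.onFun Disjoint (V t N κ)) := by
    intro i j hij
    rw [Function.onFun, Set.disjoint_left]
    intro s hi hj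
    rcases lt_or_gt_of_ne hij with h | h
    · exact hj.2 i h hi.1
    · exact hi.2 j h hj.1
  have hpt : ∀ s, (multFn t n s : ℝ≥0∞)^2 ≤ 3 * κ * multFn t n s +
      ∑ k ∈ Finset.range (n+1), (V t N κ k).indicator (fun s => (multFn t n s : ℝ≥0∞)^2) s := by
    intro s
    by_cases hs : ∃ k, k ≤ n ∧ s ∈ U t N κ k
    · have hs' : ∃ k, s ∈ U t N κ k := ⟨_, hs.choose_spec.2⟩
      have hk : s ∈ V t N κ (Nat.find hs') := ⟨Nat.find_spec hs', fun j hj => Nat.find_min hs' hj⟩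
      have hkn : Nat.find hs' ≤ n := (Nat.find_min' hs' hs.choose_spec.2).trans hs.choose_spec.1
      refine le_trans ?_ le_add_self
      refine le_trans ?_ (Finset.single_le_sum (fun _ _ => zero_le)
        (Finset.mem_range.2 (Nat.lt_succ_of_le hkn)))
      rw [Set.indicator_of_mem hk]
    · push Not at hs
      refine le_trans ?_ le_self_add
      have e1 := G_lt_of_not_U hn (hs n le_rfl)
      have e2 := multFn_le_G t n s
      rw [sq]
      gcongr
      exact_mod_cast e2.trans e1
  have hm : ∀ k, Measurable ((V t N κ k).indicator (fun s => (multFn t n s : ℝ≥0∞)^2)) := fun k =>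
    ((meas_multFn t n).pow_const 2).indicator (meas_V t N κ k)
  have hstep : ∀ k ∈ Finset.range (n+1), ∫⁻ s in V t N κ k, (multFn t n s : ℝ≥0∞)^2 ≤
      81 * (κ:ℝ≥0∞)^2 * volume (V t N κ k) * (12 * κ) := by
    intro k hk
    rw [Finset.mem_range] at hk
    rcases Nat.eq_zero_or_pos k with rfl | hpos
    · rw [V_zero hκ]; simp
    · obtain ⟨l, rfl⟩ := Nat.exists_eq_add_of_le (Nat.lt_succ_iff.1 hk)
      refine (V_step h0 h1 hκ (by omega)).trans ?_
      gcongr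
      exact ih l (by omega) (by omega)
  calc ∫⁻ s, (multFn t n s : ℝ≥0∞)^2 ≤ ∫⁻ s, (3 * κ * multFn t n s +
      ∑ k ∈ Finset.range (n+1), (V t N κ k).indicator (fun s => (multFn t n s : ℝ≥0∞)^2) s) :=
        lintegral_mono hpt
    _ = 3 * κ * 2 + ∑ k ∈ Finset.range (n+1), ∫⁻ s in V t N κ k, (multFn t n s : ℝ≥0∞)^2 := by
        rw [lintegral_add_left ((meas_multFn t n).const_mul _), lintegral_const_mul _ (meas_multFn t n),
          int_multFn, lintegral_finsetSum _ fun k _ => hm k]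
        simp only [lintegral_indicator (meas_V t N κ _)]
    _ ≤ 3 * κ * 2 + ∑ k ∈ Finset.range (n+1), 81 * (κ:ℝ≥0∞)^2 * volume (V t N κ k) * (12 * κ) := by
        gcongr with k hk
        exact hstep k hk
    _ = 6 * κ + 81 * (κ:ℝ≥0∞)^2 * (∑ k ∈ Finset.range (n+1), volume (V t N κ k)) * (12 * κ) := by
        rw [← Finset.sum_mul, ← Finset.mul_sum]; ring
    _ ≤ 6 * κ + 81 * (κ:ℝ≥0∞)^2 * (3 * volume (⋃ k, T t N κ k)) * (12 * κ) := by
        gcongr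
        refine le_trans ?_ (vol_U t N κ)
        refine (ENNReal.sum_le_tsum _).trans ?_
        rw [← measure_iUnion hVd (meas_V t N κ)]
        gcongr
        exact fun s hs => hs.1
    _ = 6 * κ + (486 * (κ:ℝ≥0∞)^2 * volume (⋃ k, T t N κ k)) * (6 * κ) := by ring
    _ ≤ 6 * κ + 1 * (6 * κ) := by gcongr
    _ = _ := by ring

end BD

namespace BD
open scoped ENNReal

noncomputable def phi (t y : ℝ) : ℂ :=
  (1 + Complex.exp ((t * y : ℝ) * Complex.I) + Complex.exp ((y : ℝ) * Complex.I)) / 3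

noncomputable def P (t : ℝ) (n : ℕ) (ξ : ℝ) : ℂ := ∏ k ∈ Finset.range n, phi t (ξ / 3 ^ (k+1))

lemma phi_cont (t : ℝ) : Continuous (phi t) := by
  unfold phi; fun_prop

lemma P_cont (t : ℝ) (n : ℕ) : Continuous (P t n) := by
  unfold P
  exact continuous_finsetProd _ fun k _ => (phi_cont t).comp (continuous_id.div_const _)

lemma P_eq (t : ℝ) (n : ℕ) (ξ : ℝ) : P t n ξ =
    (∑ a : Fin n → Fin 3, Complex.exp ((ξ * cpt t a : ℝ) * Complex.I)) / 3 ^ n := by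
  unfold P
  rw [← Fin.prod_univ_eq_prod_range (fun k => phi t (ξ / 3 ^ (k+1))) n]
  have h1 : ∀ k : Fin n, phi t (ξ / 3 ^ (k.1+1)) =
      (∑ j : Fin 3, Complex.exp ((ξ * (wgt t j * (3 : ℝ) ^ (-(k.1 + 1 : ℤ))) : ℝ) * Complex.I)) / 3 := by
    intro k
    rw [zpow_eq]
    simp only [Fin.sum_univ_three, wgt, phi]
    congr 2
    · congr 1
      · simp
      · congr 3; simp; ring
    · congr 3; simp; ring
  simp only [h1]
  rw [Finset.prod_div_distrib, Finset.prod_univ_sum, Fintype.piFinset_univ]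
  congr 1
  · apply Finset.sum_congr rfl
    intro a _
    rw [← Complex.exp_sum, ← Finset.sum_mul, ← Complex.ofReal_sum, ← Finset.mul_sum]
    rfl
  · simp

lemma normsq_P (t : ℝ) (n : ℕ) (ξ : ℝ) : ‖P t n ξ‖ ^ 2 =
    (∑ a : Fin n → Fin 3, ∑ b : Fin n → Fin 3, Real.cos (ξ * (cpt t a - cpt t b))) / 9 ^ n := by
  rw [P_eq, norm_div, div_pow]
  congr 1
  · rw [Complex.sq_norm, Complex.normSq_apply]
    simp only [Complex.re_sum, Complex.im_sum, Complex.exp_ofReal_mul_I_re, Complex.exp_ofReal_mul_I_im]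
    rw [Finset.sum_mul_sum, Finset.sum_mul_sum, ← Finset.sum_add_distrib]
    apply Finset.sum_congr rfl
    intro a _
    rw [← Finset.sum_add_distrib]
    apply Finset.sum_congr rfl
    intro b _
    rw [mul_sub, Real.cos_sub]
  · rw [norm_pow]; simp; rw [← pow_mul, mul_comm, pow_mul]; norm_num

noncomputable def J (R d : ℝ) : ℝ := ∫ ξ in (0:ℝ)..R, (1 - ξ / R) * Real.cos (ξ * d)

lemma J_zero {R : ℝ} (hR : 0 < R) : J R 0 = R / 2 := by
  unfold J
  have : ∀ x ∈ Set.uIcc 0 R, HasDerivAt (fun ξ : ℝ => ξ - ξ ^ 2 / (2 * R)) ((1 - x / R) * Real.cos (x * 0)) x := by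
    intro x _
    have := (hasDerivAt_id x).sub ((hasDerivAt_pow 2 x).div_const (2 * R))
    refine HasDerivAt.congr_deriv (f := fun ξ : ℝ => ξ - ξ ^ 2 / (2 * R)) this ?_
    simp; field_simp
  rw [intervalIntegral.integral_eq_sub_of_hasDerivAt this (Continuous.intervalIntegrable (by fun_prop) _ _)]
  field_simp; ring

lemma J_eq {R d : ℝ} (hR : 0 < R) (hd : d ≠ 0) : J R d = (1 - Real.cos (R * d)) / (R * d ^ 2) := by
  unfold J
  have : ∀ x ∈ Set.uIcc 0 R, HasDerivAt (fun ξ : ℝ => (1 - ξ / R) * (Real.sin (ξ * d) / d) - Real.cos (ξ * d) / (R * d ^ 2))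
      ((1 - x / R) * Real.cos (x * d)) x := by
    intro x _
    have h1 : HasDerivAt (fun ξ : ℝ => ξ * d) d x := by simpa using (hasDerivAt_id x).mul_const d
    have h2 := (Real.hasDerivAt_sin (x * d)).comp x h1
    have h3 := (Real.hasDerivAt_cos (x * d)).comp x h1
    have h4 : HasDerivAt (fun ξ : ℝ => 1 - ξ / R) (- (1 / R)) x := by
      simpa using ((hasDerivAt_id x).div_const R).const_sub 1
    have := (h4.mul (h2.div_const d)).sub (h3.div_const (R * d ^ 2))
    refine HasDerivAt.congr_deriv (f := fun ξ : ℝ => (1 - ξ / R) * (Real.sin (ξ * d) / d) - Real.cos (ξ * d) / (R * d ^ 2)) this ?_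
    simp only [Function.comp]
    field_simp; ring
  rw [intervalIntegral.integral_eq_sub_of_hasDerivAt this (Continuous.intervalIntegrable (by fun_prop) _ _)]
  simp
  field_simp; ring

lemma J_nonneg {R : ℝ} (hR : 0 < R) (d : ℝ) : 0 ≤ J R d := by
  by_cases hd : d = 0
  · rw [hd, J_zero hR]; positivity
  · rw [J_eq hR hd]
    have := Real.cos_le_one (R * d)
    apply div_nonneg (by linarith) (by positivity)

lemma J_le {R : ℝ} (hR : 0 < R) (d : ℝ) : J R d ≤ R / 2 := by
  by_cases hd : d = 0
  · rw [hd, J_zero hR]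
  · rw [J_eq hR hd, div_le_iff₀ (by positivity)]
    have := Real.one_sub_sq_div_two_le_cos (x := R * d)
    nlinarith

lemma J_le' {R : ℝ} (hR : 0 < R) {d : ℝ} (hd : d ≠ 0) : J R d ≤ 2 / (R * d ^ 2) := by
  rw [J_eq hR hd]
  have := Real.neg_one_le_cos (R * d)
  gcongr
  linarith

lemma int_weight (t : ℝ) (n : ℕ) (R : ℝ) :
    ∫ ξ in (0:ℝ)..R, (1 - ξ / R) * ‖P t n ξ‖ ^ 2 =
    (∑ a : Fin n → Fin 3, ∑ b : Fin n → Fin 3, J R (cpt t a - cpt t b)) / 9 ^ n := by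
  simp only [normsq_P, J]
  have : ∀ ξ : ℝ, (1 - ξ / R) * ((∑ a : Fin n → Fin 3, ∑ b : Fin n → Fin 3, Real.cos (ξ * (cpt t a - cpt t b))) / 9 ^ n)
     = (∑ a : Fin n → Fin 3, ∑ b : Fin n → Fin 3, (1 - ξ / R) * Real.cos (ξ * (cpt t a - cpt t b))) / 9 ^ n := by
    intro ξ
    rw [← mul_div_assoc, Finset.mul_sum]
    simp only [Finset.mul_sum]
  simp only [this]
  rw [intervalIntegral.integral_div, intervalIntegral.integral_finsetSum]
  · congr 1
    apply Finset.sum_congr rfl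
    intro a _
    rw [intervalIntegral.integral_finsetSum]
    intro b _
    exact Continuous.intervalIntegrable (by fun_prop) _ _
  · intro a _
    exact Continuous.intervalIntegrable (by fun_prop) _ _

lemma lower_int (t : ℝ) (n : ℕ) {R : ℝ} (hR : 0 < R) :
    R / (2 * 3 ^ n) ≤ ∫ ξ in (0:ℝ)..R, ‖P t n ξ‖ ^ 2 := by
  have hc := P_cont t n
  calc R / (2 * 3 ^ n) = (∑ a : Fin n → Fin 3, R / 2) / 9 ^ n := by
        rw [Finset.sum_const, Finset.card_univ, Fintype.card_fun, Fintype.card_fin, Fintype.card_fin,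
          nsmul_eq_mul]
        push_cast
        rw [show (9:ℝ) = 3 * 3 by norm_num, mul_pow]
        field_simp
    _ ≤ (∑ a : Fin n → Fin 3, ∑ b : Fin n → Fin 3, J R (cpt t a - cpt t b)) / 9 ^ n := by
        gcongr with a _
        refine le_trans ?_ (Finset.single_le_sum (f := fun b => J R (cpt t a - cpt t b))
          (fun b _ => J_nonneg hR _) (Finset.mem_univ a))
        simp [J_zero hR]
    _ = ∫ ξ in (0:ℝ)..R, (1 - ξ / R) * ‖P t n ξ‖ ^ 2 := (int_weight t n R).symm
    _ ≤ _ := by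
        apply intervalIntegral.integral_mono_on hR.le
          (Continuous.intervalIntegrable (by fun_prop) _ _) (Continuous.intervalIntegrable (by fun_prop) _ _)
        intro x hx
        have : 0 ≤ x / R := div_nonneg hx.1 hR.le
        nlinarith [sq_nonneg ‖P t n x‖]

lemma J_cell (n : ℕ) (c c' : ℝ) : J (2 * 3 ^ n) (c - c') ≤
    3 ^ n * (5 * (1 / (1 + ((⌊3 ^ n * c⌋ - ⌊3 ^ n * c'⌋ : ℤ) : ℝ) ^ 2))) := by
  have h3 : (0:ℝ) < 3 ^ n := by positivity
  set p : ℤ := ⌊3 ^ n * c⌋ - ⌊3 ^ n * c'⌋ with hp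
  have hpR : (p:ℝ) = ⌊3 ^ n * c⌋ - ⌊3 ^ n * c'⌋ := by rw [hp]; push_cast; rfl
  have f1 := Int.floor_le (3 ^ n * c)
  have f2 := Int.lt_floor_add_one (3 ^ n * c)
  have f3 := Int.floor_le (3 ^ n * c')
  have f4 := Int.lt_floor_add_one (3 ^ n * c')
  by_cases hp2 : |p| ≤ 1
  · have h1 : (p:ℝ) ^ 2 ≤ 1 := by
      have : |(p:ℝ)| ≤ 1 := by exact_mod_cast hp2
      rw [abs_le] at this; nlinarith
    have := J_le (R := 2 * 3 ^ n) (by positivity) (c - c')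
    have h2 : 1 ≤ 5 * (1 / (1 + (p:ℝ) ^ 2)) := by
      rw [mul_one_div, le_div_iff₀ (by positivity)]; linarith
    nlinarith
  · have h2 : (2:ℝ) ≤ |(p:ℝ)| := by
      have : 2 ≤ |p| := by omega
      exact_mod_cast this
    set x := 3 ^ n * (c - c') with hx
    have hx1 : |(p:ℝ)| - 1 ≤ |x| := by
      have : |(p:ℝ) - x| ≤ 1 := by
        rw [abs_le, hx, hpR]; constructor <;> nlinarith
      have := abs_sub_abs_le_abs_sub (p:ℝ) x
      linarith
    have hxp : 0 < |x| := by linarith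
    have hd : c - c' ≠ 0 := by
      intro h; rw [hx, h] at hxp; simp at hxp
    refine (J_le' (R := 2 * 3 ^ n) (by positivity) hd).trans ?_
    have e1 : 2 / (2 * 3 ^ n * (c - c') ^ 2) = 3 ^ n * (1 / x ^ 2) := by
      rw [hx]; field_simp
    rw [e1]
    gcongr
    rw [mul_one_div, div_le_div_iff₀ (by positivity) (by positivity), one_mul]
    rw [← sq_abs x, ← sq_abs (p:ℝ)]
    nlinarith

lemma sum_w : ∃ C : ℝ, 0 < C ∧ ∀ (S : Finset ℤ) (i : ℤ),
    ∑ j ∈ S, (1 / (1 + ((i - j : ℤ) : ℝ) ^ 2)) ≤ C := by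
  have hs : Summable (fun p : ℤ => 1 / (1 + (p:ℝ) ^ 2)) := by
    have h1 : Summable (fun p : ℤ => 1 / (p:ℝ) ^ 2) := Real.summable_one_div_int_pow.2 (by norm_num)
    have h2 : Summable (fun p : ℤ => 1 / (p:ℝ) ^ 2 + if p = 0 then 1 else 0) :=
      h1.add (summable_of_ne_finset_zero (s := {0}) (by intro b hb; simp at hb; simp [hb]))
    refine Summable.of_nonneg_of_le (fun p => by positivity) (fun p => ?_) h2
    by_cases hp : p = 0
    · simp [hp]
    · have : (p:ℝ) ≠ 0 := by exact_mod_cast hp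
      have : 0 < (p:ℝ)^2 := by positivity
      simp only [hp, if_false, add_zero]
      gcongr; linarith
  refine ⟨∑' p : ℤ, 1 / (1 + (p:ℝ) ^ 2), hs.tsum_pos (fun p => by positivity) 0 (by simp), ?_⟩
  intro S i
  have := hs.sum_le_tsum (S.image (fun j => i - j)) (fun p _ => by positivity)
  rwa [Finset.sum_image (by intro a _ b _ h; simpa using h)] at this

lemma sum_nu_sq (t : ℝ) (n : ℕ) (S : Finset ℤ) :
    ENNReal.ofReal ((∑ i ∈ S, (nu t n i : ℝ)^2) / 3 ^ n) ≤ ∫⁻ s, (multFn t n s : ℝ≥0∞)^2 := by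
  have hm : ∀ i : ℤ, MeasurableSet {s : ℝ | ⌊(3:ℝ) ^ n * s⌋ = i} := fun i =>
    meas_floor n (MeasurableSet.of_discrete (s := {i}))
  calc ENNReal.ofReal ((∑ i ∈ S, (nu t n i : ℝ)^2) / 3 ^ n)
      = ∑ i ∈ S, (nu t n i : ℝ≥0∞)^2 * volume {s : ℝ | ⌊(3:ℝ) ^ n * s⌋ = i} := by
        rw [Finset.sum_div, ENNReal.ofReal_sum_of_nonneg (fun i _ => by positivity)]
        apply Finset.sum_congr rfl
        intro i _
        rw [vol_cell, div_eq_mul_one_div, ENNReal.ofReal_mul (by positivity), ENNReal.ofReal_pow (by positivity),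
          ENNReal.ofReal_natCast]
    _ = ∫⁻ s, ∑ i ∈ S, ({s : ℝ | ⌊(3:ℝ) ^ n * s⌋ = i}).indicator (fun _ => (nu t n i : ℝ≥0∞)^2) s := by
        rw [lintegral_finsetSum _ fun i _ => measurable_const.indicator (hm i)]
        apply Finset.sum_congr rfl
        intro i _
        rw [lintegral_indicator_const (hm i)]
    _ ≤ _ := by
        apply lintegral_mono
        intro s
        have h1 : ∑ i ∈ S, ({s : ℝ | ⌊(3:ℝ) ^ n * s⌋ = i}).indicator (fun _ => (nu t n i : ℝ≥0∞)^2) s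
          ≤ ((nu t n ⌊(3:ℝ) ^ n * s⌋ : ℕ) : ℝ≥0∞)^2 := by
          simp only [Set.indicator_apply, Set.mem_ofPred_eq]
          rw [Finset.sum_ite_eq]
          split_ifs
          · exact le_rfl
          · exact zero_le
        refine h1.trans ?_
        have := nu_le_multFn t n s
        exact pow_le_pow_left' (by exact_mod_cast this) 2

lemma sum_pairs (t : ℝ) (n : ℕ) {C : ℝ} (hC : ∀ (S : Finset ℤ) (i : ℤ),
    ∑ j ∈ S, (1 / (1 + ((i - j : ℤ) : ℝ) ^ 2)) ≤ C) : ∃ S : Finset ℤ,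
    ∑ a : Fin n → Fin 3, ∑ b : Fin n → Fin 3,
      (1 / (1 + ((⌊3 ^ n * cpt t a⌋ - ⌊3 ^ n * cpt t b⌋ : ℤ) : ℝ) ^ 2)) ≤ C * ∑ i ∈ S, (nu t n i : ℝ)^2 := by
  classical
  let S : Finset ℤ := Finset.univ.image (fun a : Fin n → Fin 3 => ⌊3 ^ n * cpt t a⌋)
  refine ⟨S, ?_⟩
  have hf : ∀ g : ℤ → ℝ, ∑ a : Fin n → Fin 3, g ⌊3 ^ n * cpt t a⌋ = ∑ i ∈ S, (nu t n i : ℝ) * g i := by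
    intro g
    rw [← Finset.sum_fiberwise_of_maps_to (g := fun a : Fin n → Fin 3 => ⌊3 ^ n * cpt t a⌋) (t := S)
      (fun a _ => Finset.mem_image_of_mem _ (Finset.mem_univ a))]
    apply Finset.sum_congr rfl
    intro i _
    rw [Finset.sum_congr rfl (g := fun _ => g i) (by intro a ha; rw [(Finset.mem_filter.1 ha).2])]
    rw [Finset.sum_const, nsmul_eq_mul]
    rfl
  have hw : ∀ i j : ℤ, (1 / (1 + ((i - j : ℤ) : ℝ) ^ 2)) = (1 / (1 + ((j - i : ℤ) : ℝ) ^ 2)) := by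
    intro i j; push_cast; congr 2; ring
  calc _ = ∑ i ∈ S, (nu t n i : ℝ) * ∑ j ∈ S, (nu t n j : ℝ) * (1 / (1 + ((i - j : ℤ) : ℝ) ^ 2)) := by
        rw [← hf (fun i => ∑ j ∈ S, (nu t n j : ℝ) * (1 / (1 + ((i - j : ℤ) : ℝ) ^ 2)))]
        apply Finset.sum_congr rfl
        intro a _
        exact hf (fun j => (1 / (1 + ((⌊3 ^ n * cpt t a⌋ - j : ℤ) : ℝ) ^ 2)))
    _ ≤ ∑ i ∈ S, ∑ j ∈ S, ((nu t n i : ℝ)^2 * (1 / (1 + ((i - j : ℤ) : ℝ) ^ 2)) / 2 +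
          (nu t n j : ℝ)^2 * (1 / (1 + ((i - j : ℤ) : ℝ) ^ 2)) / 2) := by
        apply Finset.sum_le_sum
        intro i _
        rw [Finset.mul_sum]
        apply Finset.sum_le_sum
        intro j _
        have : 0 ≤ (1 / (1 + ((i - j : ℤ) : ℝ) ^ 2)) := by positivity
        nlinarith [mul_nonneg this (sq_nonneg ((nu t n i : ℝ) - nu t n j))]
    _ = ∑ i ∈ S, (nu t n i : ℝ)^2 * ∑ j ∈ S, (1 / (1 + ((i - j : ℤ) : ℝ) ^ 2)) := by
        simp only [Finset.sum_add_distrib]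
        rw [Finset.sum_comm (f := fun i j : ℤ => (nu t n j : ℝ)^2 * (1 / (1 + ((i - j : ℤ) : ℝ) ^ 2)) / 2),
          ← Finset.sum_add_distrib]
        apply Finset.sum_congr rfl
        intro i _
        rw [Finset.mul_sum, ← Finset.sum_add_distrib]
        apply Finset.sum_congr rfl
        intro j _
        rw [hw j i]; ring
    _ ≤ ∑ i ∈ S, (nu t n i : ℝ)^2 * C := by
        gcongr with i _
        exact hC S i
    _ = _ := by rw [← Finset.sum_mul, mul_comm]

theorem upper_int : ∃ C : ℝ, 0 < C ∧ ∀ (t : ℝ) (n : ℕ) (B : ℝ), 0 ≤ B →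
    ∫⁻ s, (multFn t n s : ℝ≥0∞)^2 ≤ ENNReal.ofReal B →
    ∫ ξ in (0:ℝ)..(3 ^ n), ‖P t n ξ‖ ^ 2 ≤ C * B := by
  obtain ⟨C, hC0, hC⟩ := sum_w
  refine ⟨10 * C, by positivity, ?_⟩
  intro t n B hB h
  have h3 : (0:ℝ) < 3 ^ n := by positivity
  have hc := P_cont t n
  obtain ⟨S, hS⟩ := sum_pairs t n hC
  have hS2 := (ENNReal.ofReal_le_ofReal_iff hB).1 ((sum_nu_sq t n S).trans h)
  have h1 : ∫ ξ in (0:ℝ)..(3 ^ n), ‖P t n ξ‖ ^ 2 ≤ ∫ ξ in (0:ℝ)..(3 ^ n), 2 * ((1 - ξ / (2 * 3 ^ n)) * ‖P t n ξ‖ ^ 2) := by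
    apply intervalIntegral.integral_mono_on h3.le
      (Continuous.intervalIntegrable (by fun_prop) _ _) (Continuous.intervalIntegrable (by fun_prop) _ _)
    intro x hx
    have : x / (2 * 3 ^ n) ≤ 1 / 2 := by
      rw [div_le_div_iff₀ (by positivity) (by positivity)]; linarith [hx.2]
    nlinarith [sq_nonneg ‖P t n x‖]
  have h2 : ∫ ξ in (0:ℝ)..(3 ^ n), ((1 - ξ / (2 * 3 ^ n)) * ‖P t n ξ‖ ^ 2) ≤
      ∫ ξ in (0:ℝ)..(2 * 3 ^ n), ((1 - ξ / (2 * 3 ^ n)) * ‖P t n ξ‖ ^ 2) := by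
    apply intervalIntegral.integral_mono_interval le_rfl h3.le (by linarith)
    · filter_upwards [ae_restrict_mem measurableSet_Ioc] with x hx
      have : x / (2 * 3 ^ n) ≤ 1 := by
        rw [div_le_one (by positivity)]; exact hx.2
      exact mul_nonneg (by linarith) (by positivity)
    · exact Continuous.intervalIntegrable (by fun_prop) _ _
  rw [int_weight] at h2
  have h4 : (∑ a : Fin n → Fin 3, ∑ b : Fin n → Fin 3, J (2 * 3 ^ n) (cpt t a - cpt t b)) / 9 ^ n ≤ 5 * C * B := by
    have e1 : ∑ a : Fin n → Fin 3, ∑ b : Fin n → Fin 3, J (2 * 3 ^ n) (cpt t a - cpt t b) ≤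
        3 ^ n * 5 * ∑ a : Fin n → Fin 3, ∑ b : Fin n → Fin 3,
      (1 / (1 + ((⌊3 ^ n * cpt t a⌋ - ⌊3 ^ n * cpt t b⌋ : ℤ) : ℝ) ^ 2)) := by
      simp only [Finset.mul_sum]
      gcongr with a _ b _
      rw [mul_assoc]
      exact J_cell n _ _
    rw [div_le_iff₀ (by positivity)]
    rw [div_le_iff₀ h3] at hS2
    calc _ ≤ 3 ^ n * 5 * (C * ∑ i ∈ S, (nu t n i : ℝ)^2) := e1.trans (by gcongr)
      _ ≤ 3 ^ n * 5 * (C * (B * 3 ^ n)) := by gcongr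
      _ = _ := by rw [show (9:ℝ) = 3 * 3 by norm_num, mul_pow]; ring
  rw [intervalIntegral.integral_const_mul] at h1
  linarith

end BD

namespace BD
open scoped ENNReal

lemma cube_near {u v : ℂ} (hu : ‖u‖ = 1) (hv : ‖v‖ = 1) : ‖u ^ 3 - 1‖ ≤ 6 * ‖1 + u + v‖ := by
  set η := 1 + u + v with hη
  have cu : u * (starRingEnd ℂ) u = 1 := by
    rw [Complex.mul_conj, Complex.normSq_eq_norm_sq, hu]; simp
  have cv : v * (starRingEnd ℂ) v = 1 := by
    rw [Complex.mul_conj, Complex.normSq_eq_norm_sq, hv]; simp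
  have cη : (starRingEnd ℂ) η = 1 + (starRingEnd ℂ) u + (starRingEnd ℂ) v := by
    rw [hη]; simp
  have key : u + 1 + (starRingEnd ℂ) u = - (η * (starRingEnd ℂ) v) + (starRingEnd ℂ) η * (1 + u) := by
    rw [cη, hη]; linear_combination cv - cu
  have h1 : ‖u + 1 + (starRingEnd ℂ) u‖ ≤ 3 * ‖η‖ := by
    rw [key]
    refine (norm_add_le _ _).trans ?_
    rw [norm_neg, norm_mul, norm_mul, RCLike.norm_conj, RCLike.norm_conj, hv]
    have : ‖1 + u‖ ≤ 2 := by
      refine (norm_add_le _ _).trans ?_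
      rw [hu]; norm_num
    nlinarith [norm_nonneg η]
  have h2 : u ^ 3 - 1 = (u - 1) * (u * (u + 1 + (starRingEnd ℂ) u)) := by
    linear_combination (1 - u) * cu
  rw [h2, norm_mul, norm_mul, hu, one_mul]
  have : ‖u - 1‖ ≤ 2 := by
    refine (norm_sub_le _ _).trans ?_
    rw [hu]; norm_num
  nlinarith [norm_nonneg (u-1), norm_nonneg (u + 1 + (starRingEnd ℂ) u)]

lemma pow_near {z : ℂ} (hz : ‖z‖ = 1) (k : ℕ) : ‖z ^ k - 1‖ ≤ k * ‖z - 1‖ := by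
  induction k with
  | zero => simp
  | succ k ih =>
    have : z ^ (k+1) - 1 = z * (z ^ k - 1) + (z - 1) := by ring
    rw [this]
    refine (norm_add_le _ _).trans ?_
    rw [norm_mul, hz]; push_cast; linarith

lemma norm_e (x : ℝ) : ‖Complex.exp ((x : ℝ) * Complex.I)‖ = 1 := Complex.norm_exp_ofReal_mul_I x

lemma phi_eta (t y : ℝ) : ‖1 + Complex.exp ((t * y : ℝ) * Complex.I) + Complex.exp ((y : ℝ) * Complex.I)‖
    = 3 * ‖phi t y‖ := by
  unfold phi; rw [norm_div]; simp; ring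

lemma cube_u (t y : ℝ) : ‖Complex.exp ((t * y : ℝ) * Complex.I) ^ 3 - 1‖ ≤ 18 * ‖phi t y‖ := by
  have := cube_near (norm_e (t * y)) (norm_e y)
  rw [phi_eta] at this; linarith

lemma cube_v (t y : ℝ) : ‖Complex.exp ((y : ℝ) * Complex.I) ^ 3 - 1‖ ≤ 18 * ‖phi t y‖ := by
  have := cube_near (norm_e y) (norm_e (t * y))
  rw [show 1 + Complex.exp ((y : ℝ) * Complex.I) + Complex.exp ((t * y : ℝ) * Complex.I) =
    1 + Complex.exp ((t * y : ℝ) * Complex.I) + Complex.exp ((y : ℝ) * Complex.I) by ring, phi_eta] at this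
  linarith

lemma exp_scale (x : ℝ) (i : ℕ) : Complex.exp ((3 ^ (i+1) * x : ℝ) * Complex.I) =
    (Complex.exp ((x : ℝ) * Complex.I) ^ 3) ^ (3 ^ i) := by
  rw [← pow_mul, ← Complex.exp_nat_mul]
  congr 1
  push_cast
  ring

lemma phi_near_one (t y : ℝ) (i : ℕ) : ‖phi t (3 ^ (i+1) * y) - 1‖ ≤ 4 * 3 ^ (i+1) * ‖phi t y‖ := by
  have hu := pow_near (z := Complex.exp ((t * y : ℝ) * Complex.I) ^ 3) (by rw [norm_pow, norm_e]; simp) (3 ^ i)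
  have hv := pow_near (z := Complex.exp ((y : ℝ) * Complex.I) ^ 3) (by rw [norm_pow, norm_e]; simp) (3 ^ i)
  rw [← exp_scale] at hu hv
  have h1 := cube_u t y
  have h2 := cube_v t y
  have e : phi t (3 ^ (i+1) * y) - 1 = ((Complex.exp ((3 ^ (i+1) * (t * y) : ℝ) * Complex.I) - 1) +
      (Complex.exp ((3 ^ (i+1) * y : ℝ) * Complex.I) - 1)) / 3 := by
    unfold phi
    rw [show t * (3 ^ (i+1) * y) = 3 ^ (i+1) * (t * y) by ring]
    ring
  rw [e, norm_div]
  have h3 := norm_add_le (Complex.exp ((3 ^ (i+1) * (t * y) : ℝ) * Complex.I) - 1)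
      (Complex.exp ((3 ^ (i+1) * y : ℝ) * Complex.I) - 1)
  have h4 : ‖(3:ℂ)‖ = 3 := by simp
  rw [h4, div_le_iff₀ (by norm_num)]
  push_cast at hu hv
  have h5 : (0:ℝ) < 3 ^ i := by positivity
  calc _ ≤ _ := h3
    _ ≤ 3 ^ i * (18 * ‖phi t y‖) + 3 ^ i * (18 * ‖phi t y‖) := by
      apply add_le_add
      · refine le_trans ?_ (mul_le_mul_of_nonneg_left h1 h5.le)
        push_cast
        exact hu
      · refine le_trans ?_ (mul_le_mul_of_nonneg_left h2 h5.le)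
        push_cast
        exact hv
    _ = _ := by ring

lemma window (t y : ℝ) (r : ℕ) (h : 12 * 3 ^ r * ‖phi t y‖ ≤ 1) :
    ‖phi t y‖ * (1 - 6 * 3 ^ r * ‖phi t y‖) ≤ ∏ i ∈ Finset.range (r+1), ‖phi t (3 ^ i * y)‖ := by
  set ε := ‖phi t y‖ with hε
  have hε0 : 0 ≤ ε := norm_nonneg _
  induction r with
  | zero => simp [← hε]; nlinarith
  | succ r ih =>
    rw [Finset.prod_range_succ]
    have h3 : (0:ℝ) < 3 ^ r := by positivity
    have hq : 0 ≤ 3 ^ r * ε := by positivity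
    rw [pow_succ] at h
    have e0 : 12 * (3 ^ r * 3) * ε = 36 * (3 ^ r * ε) := by ring
    have e1 : 12 * 3 ^ r * ε = 12 * (3 ^ r * ε) := by ring
    have h0 : 12 * 3 ^ r * ε ≤ 1 := by rw [e0] at h; rw [e1]; linarith
    have ih' := ih h0
    have h1 := phi_near_one t y r
    have h2 : 1 - 4 * 3 ^ (r+1) * ε ≤ ‖phi t (3 ^ (r+1) * y)‖ := by
      have := norm_sub_norm_le (1:ℂ) (phi t (3 ^ (r+1) * y))
      rw [norm_sub_rev, norm_one] at this
      linarith
    rw [pow_succ] at h2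
    have h4 : ε * (1 - 6 * 3 ^ r * ε) * (1 - 4 * (3 ^ r * 3) * ε) ≤
        (∏ i ∈ Finset.range (r+1), ‖phi t (3 ^ i * y)‖) * ‖phi t (3 ^ (r+1) * y)‖ := by
      refine mul_le_mul ih' h2 ?_ (Finset.prod_nonneg fun i _ => norm_nonneg _)
      have e : 4 * (3 ^ r * 3) * ε = 12 * (3 ^ r * ε) := by ring
      have e2 : 12 * (3 ^ r * 3) * ε = 36 * (3 ^ r * ε) := by ring
      rw [e2] at h
      rw [e]
      linarith
    refine le_trans ?_ h4
    rw [pow_succ]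
    have e3 : ε * (1 - 6 * 3 ^ r * ε) * (1 - 4 * (3 ^ r * 3) * ε) =
        ε * (1 - 6 * (3 ^ r * 3) * ε) + 72 * (ε * ((3 ^ r * ε) * (3 ^ r * ε))) := by ring
    have e4 := mul_nonneg hε0 (mul_nonneg hq hq)
    rw [e3]
    linarith

lemma prod_lower (t : ℝ) {ε₀ : ℝ} (hε : 0 < ε₀) (hε1 : ε₀ ≤ 1) (m : ℕ) : ∀ y : ℝ,
    (∀ j < m, ε₀ ≤ ‖phi t (3 ^ j * y)‖) →
    ε₀ / 2 * (1 / 81) ^ m ≤ ∏ j ∈ Finset.range m, ‖phi t (3 ^ j * y)‖ := by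
  induction m using Nat.strong_induction_on with
  | _ m ih =>
  intro y hy
  rcases Nat.eq_zero_or_pos m with rfl | hm
  · simp; linarith
  have hstep : ∀ r, r + 1 ≤ m → (1/81 : ℝ) ^ (r+1) ≤ ∏ i ∈ Finset.range (r+1), ‖phi t (3 ^ i * y)‖ →
      ε₀ / 2 * (1 / 81) ^ m ≤ ∏ j ∈ Finset.range m, ‖phi t (3 ^ j * y)‖ := by
    intro r hr h
    obtain ⟨d, rfl⟩ := Nat.exists_eq_add_of_le hr
    rw [Finset.prod_range_add]
    have := ih d (by omega) (3 ^ (r+1) * y) (by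
      intro j hj
      have := hy (r + 1 + j) (by omega)
      rwa [show (3:ℝ) ^ j * (3 ^ (r+1) * y) = 3 ^ (r+1+j) * y by ring])
    have e : ∏ x ∈ Finset.range d, ‖phi t (3 ^ (r+1+x) * y)‖ = ∏ x ∈ Finset.range d, ‖phi t (3 ^ x * (3 ^ (r+1) * y))‖ := by
      apply Finset.prod_congr rfl
      intro x _
      congr 2; ring
    rw [e, pow_add]
    calc _ = (1/81:ℝ) ^ (r+1) * (ε₀ / 2 * (1 / 81) ^ d) := by ring
      _ ≤ _ := by gcongr
  have hy0 : ε₀ ≤ ‖phi t y‖ := by simpa using hy 0 hm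
  set ε := ‖phi t y‖ with hεd
  have hεp : 0 < ε := hε.trans_le hy0
  by_cases hc : 1 < 12 * ε
  · apply hstep 0 hm
    simp [← hεd]
    linarith
  · push Not at hc
    obtain ⟨r, hr1, hr2⟩ := exists_nat_pow_near (x := 1 / (12 * ε)) (y := 3)
      (by rw [le_div_iff₀ (by positivity)]; linarith) (by norm_num)
    rw [le_div_iff₀ (by positivity)] at hr1
    rw [div_lt_iff₀ (by positivity)] at hr2
    by_cases hrm : r + 1 ≤ m
    · apply hstep r hrm
      refine le_trans ?_ (window t y r (by linarith))
      rw [← hεd]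
      have h1 : ε / 2 ≤ ε * (1 - 6 * 3 ^ r * ε) := by nlinarith
      refine le_trans ?_ h1
      have h27 : (1:ℝ) ≤ 27 ^ r := one_le_pow₀ (by norm_num)
      rw [one_div, inv_pow, inv_le_iff_one_le_mul₀ (by positivity)]
      have e81 : (81:ℝ) ^ (r+1) = 27 ^ r * (27 * 3 ^ (r+1)) := by
        rw [show (81:ℝ) = 27 * 3 by norm_num, mul_pow]; ring
      rw [e81]
      have : 1 ≤ ε / 2 * (27 * 3 ^ (r+1)) := by nlinarith
      nlinarith
    · obtain ⟨d, rfl⟩ : ∃ d, m = d + 1 := ⟨m - 1, by omega⟩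
      have hdr : (3:ℝ) ^ d ≤ 3 ^ r := pow_le_pow_right₀ (by norm_num) (by omega)
      have hd : 12 * 3 ^ d * ε ≤ 1 := by nlinarith
      refine le_trans ?_ (window t y d hd)
      rw [← hεd]
      have h1 : ε / 2 ≤ ε * (1 - 6 * 3 ^ d * ε) := by nlinarith
      refine le_trans ?_ h1
      have : (1/81:ℝ) ^ (d+1) ≤ 1 := pow_le_one₀ (by norm_num) (by norm_num)
      nlinarith

lemma phi_lower {t : ℝ} (h0 : 0 ≤ t) (h1 : t ≤ 1) (y : ℝ) : 1 - y ^ 2 / 3 ≤ ‖phi t y‖ := by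
  have h : (phi t y).re = (1 + Real.cos (t * y) + Real.cos y) / 3 := by
    unfold phi
    rw [show (3:ℂ) = ((3:ℝ):ℂ) by simp, Complex.div_ofReal_re, Complex.add_re, Complex.add_re,
      Complex.exp_ofReal_mul_I_re, Complex.exp_ofReal_mul_I_re]
    simp
  have h2 := Complex.re_le_norm (phi t y)
  have h3 := Real.one_sub_sq_div_two_le_cos (x := y)
  have h4 := Real.one_sub_sq_div_two_le_cos (x := t * y)
  have h5 : (t * y) ^ 2 ≤ y ^ 2 := by
    rw [mul_pow]; nlinarith [sq_nonneg y, mul_nonneg h0 (sub_nonneg.2 h1)]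
  linarith

lemma tail {t : ℝ} (h0 : 0 ≤ t) (h1 : t ≤ 1) (n r : ℕ) {ξ : ℝ} (hξ0 : 0 ≤ ξ) (hξ : ξ ≤ 3 ^ n) :
    ‖P t n ξ‖ * (1 / 2 + (1 / 3) ^ r / 2) ≤ ‖P t (n + r) ξ‖ := by
  induction r with
  | zero => simp; norm_num
  | succ r ih =>
    have e : ‖P t (n + (r+1)) ξ‖ = ‖P t (n+r) ξ‖ * ‖phi t (ξ / 3 ^ (n + r + 1))‖ := by
      unfold P
      rw [← add_assoc, Finset.prod_range_succ, norm_mul]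
    rw [e]
    set q : ℝ := (1/3) ^ r with hq
    have hq0 : 0 < q := by positivity
    have hq1 : q ≤ 1 := pow_le_one₀ (by norm_num) (by norm_num)
    have hy : ξ / 3 ^ (n + r + 1) ≤ q / 3 := by
      rw [div_le_iff₀ (by positivity)]
      have : q / 3 * 3 ^ (n + r + 1) = 3 ^ n := by
        rw [hq, pow_succ, pow_add, one_div, inv_pow]; field_simp
      rw [this]; exact hξ
    have hy0 : 0 ≤ ξ / 3 ^ (n + r + 1) := by positivity
    have h2 : 1 - q / 9 ≤ ‖phi t (ξ / 3 ^ (n + r + 1))‖ := by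
      refine le_trans ?_ (phi_lower h0 h1 _)
      nlinarith
    calc _ ≤ ‖P t n ξ‖ * ((1 / 2 + q / 2) * (1 - q / 9)) := by
          apply mul_le_mul_of_nonneg_left _ (norm_nonneg _)
          rw [pow_succ, ← hq]; nlinarith
      _ = (‖P t n ξ‖ * (1 / 2 + q / 2)) * (1 - q / 9) := by ring
      _ ≤ _ := by
          apply mul_le_mul ih h2 (by linarith) (norm_nonneg _)

def Good (t : ℝ) (m : ℕ) : Prop := ∀ y : ℝ, 0 ≤ y → y ≤ 3 ^ m → (1/81 : ℝ) ^ m ≤ ‖phi t y‖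

lemma middle {t : ℝ} {m : ℕ} (hg : Good t m) (l : ℕ) {ξ : ℝ} (hξ0 : 0 ≤ ξ) (hξ : ξ ≤ 3 ^ (l + m)) :
    ‖P t l ξ‖ * ((1/81 : ℝ) ^ m / 2 * (1 / 81) ^ m) ≤ ‖P t (l + m) ξ‖ := by
  have e : ‖P t (l + m) ξ‖ = ‖P t l ξ‖ * ∏ j ∈ Finset.range m, ‖phi t (3 ^ j * (ξ / 3 ^ (l+m)))‖ := by
    unfold P
    rw [Finset.prod_range_add, norm_mul]
    congr 1
    rw [norm_prod, ← Finset.prod_range_reflect]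
    apply Finset.prod_congr rfl
    intro j hj
    rw [Finset.mem_range] at hj
    congr 2
    obtain ⟨d, rfl⟩ : ∃ d, m = j + d + 1 := ⟨m - j - 1, by omega⟩
    rw [show j + d + 1 - 1 - j = d by omega]
    rw [show l + (j + d + 1) = j + (l + d + 1) by ring, pow_add 3 j]
    field_simp
  rw [e]
  apply mul_le_mul_of_nonneg_left _ (norm_nonneg _)
  apply prod_lower t (by positivity) (pow_le_one₀ (by norm_num) (by norm_num))
  intro j hj
  have hy : 0 ≤ ξ / 3 ^ (l+m) := by positivity
  have hy1 : ξ / 3 ^ (l+m) ≤ 1 := by rw [div_le_one (by positivity)]; exact hξ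
  apply hg _ (by positivity)
  have : (3:ℝ) ^ j ≤ 3 ^ m := pow_le_pow_right₀ (by norm_num) hj.le
  have h3 : (0:ℝ) < 3 ^ j := by positivity
  nlinarith

lemma band {t : ℝ} (h0 : 0 ≤ t) (h1 : t ≤ 1) {m : ℕ} (hg : Good t m) (l N : ℕ) (hN : l + m ≤ N) :
    (1/81 : ℝ) ^ (4 * m) / 16 * ∫ ξ in (3 ^ l : ℝ)..(3 ^ (l+m)), ‖P t l ξ‖ ^ 2 ≤
      ∫ ξ in (3 ^ l : ℝ)..(3 ^ (l+m)), ‖P t N ξ‖ ^ 2 := by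
  have hc := P_cont t l
  have hc' := P_cont t N
  rw [← intervalIntegral.integral_const_mul]
  apply intervalIntegral.integral_mono_on (pow_le_pow_right₀ (by norm_num) (by omega))
      (Continuous.intervalIntegrable (by fun_prop) _ _) (Continuous.intervalIntegrable (by fun_prop) _ _)
  intro x hx
  have hx0 : 0 ≤ x := le_trans (by positivity) hx.1
  obtain ⟨r, rfl⟩ := Nat.exists_eq_add_of_le hN
  have e1 := middle hg l hx0 hx.2
  have e2 := tail h0 h1 (l+m) r hx0 hx.2
  have e3 : ‖P t (l+m) x‖ * (1/2) ≤ ‖P t (l+m+r) x‖ := by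
    refine le_trans ?_ e2
    apply mul_le_mul_of_nonneg_left _ (norm_nonneg _)
    have : (0:ℝ) < (1/3)^r := by positivity
    linarith
  have e4 : ‖P t l x‖ * ((1/81 : ℝ) ^ m / 2 * (1 / 81) ^ m) * (1/2) ≤ ‖P t (l+m+r) x‖ := by linarith
  calc _ = (‖P t l x‖ * ((1/81 : ℝ) ^ m / 2 * (1 / 81) ^ m) * (1/2)) ^ 2 := by
        rw [mul_comm 4 m, pow_mul]; ring
    _ ≤ _ := by gcongr

theorem main_contra {t : ℝ} (h0 : 0 ≤ t) (h1 : t ≤ 1) {m : ℕ} (hg : Good t m) {N M : ℕ} {D : ℝ}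
    (hD : ∀ n ≤ N, ∫ ξ in (0:ℝ)..(3 ^ n), ‖P t n ξ‖ ^ 2 ≤ D) (hm : 2 * D + 2 ≤ 3 ^ m) (hM : M * m ≤ N) :
    M * ((1/81 : ℝ) ^ (4 * m) / 16) ≤ D := by
  have hcN := P_cont t N
  have hint : ∀ a b : ℝ, IntervalIntegrable (fun ξ => ‖P t N ξ‖ ^ 2) volume a b := fun a b =>
    Continuous.intervalIntegrable (by fun_prop) _ _
  have hb : ∀ i ∈ Finset.range M, (1/81 : ℝ) ^ (4 * m) / 16 ≤
      ∫ ξ in (3 ^ (i * m) : ℝ)..(3 ^ ((i+1) * m)), ‖P t N ξ‖ ^ 2 := by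
    intro i hi
    rw [Finset.mem_range] at hi
    have hle : i * m + m ≤ N := by
      have : (i + 1) * m ≤ M * m := Nat.mul_le_mul_right _ hi
      linarith [this, add_mul i 1 m]
    rw [show (i+1) * m = i * m + m by ring]
    refine le_trans ?_ (band h0 h1 hg (i * m) N hle)
    have hc := P_cont t (i*m)
    have a1 := lower_int t (i * m) (R := 3 ^ (i * m + m)) (by positivity)
    have a2 := hD (i * m) (by omega)
    have a3 := intervalIntegral.integral_add_adjacent_intervals (μ := volume) (a := 0) (b := 3 ^ (i * m)) (c := 3 ^ (i * m + m))
      (f := fun ξ => ‖P t (i*m) ξ‖ ^ 2)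
      (Continuous.intervalIntegrable (by fun_prop) _ _) (Continuous.intervalIntegrable (by fun_prop) _ _)
    have a4 : (3:ℝ) ^ (i * m + m) / (2 * 3 ^ (i * m)) = 3 ^ m / 2 := by
      rw [pow_add]; field_simp
    have a5 : 1 ≤ ∫ ξ in (3 ^ (i * m) : ℝ)..(3 ^ (i * m + m)), ‖P t (i * m) ξ‖ ^ 2 := by
      rw [a4] at a1; linarith
    have : (0:ℝ) < (1/81 : ℝ) ^ (4 * m) / 16 := by positivity
    nlinarith
  calc M * ((1/81 : ℝ) ^ (4 * m) / 16) = ∑ i ∈ Finset.range M, (1/81 : ℝ) ^ (4 * m) / 16 := by simp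
    _ ≤ ∑ i ∈ Finset.range M, ∫ ξ in (3 ^ (i * m) : ℝ)..(3 ^ ((i+1) * m)), ‖P t N ξ‖ ^ 2 :=
        Finset.sum_le_sum hb
    _ = ∫ ξ in (3 ^ (0 * m) : ℝ)..(3 ^ (M * m)), ‖P t N ξ‖ ^ 2 :=
        intervalIntegral.sum_integral_adjacent_intervals (a := fun i => (3 ^ (i * m) : ℝ)) fun k _ => hint _ _
    _ ≤ ∫ ξ in (0 : ℝ)..(3 ^ N), ‖P t N ξ‖ ^ 2 := by
        apply intervalIntegral.integral_mono_interval (by positivity)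
          (pow_le_pow_right₀ (by norm_num) (by omega)) (pow_le_pow_right₀ (by norm_num) hM)
        · exact Filter.Eventually.of_forall fun x => by positivity
        · exact hint _ _
    _ ≤ D := hD N le_rfl

lemma near_int {θ δ : ℝ} (h : ‖Complex.exp ((θ : ℝ) * Complex.I) - 1‖ ≤ δ) :
    ∃ p : ℤ, |θ - 2 * Real.pi * p| ≤ Real.pi / 2 * δ := by
  have hpi := Real.pi_pos
  refine ⟨round (θ / (2 * Real.pi)), ?_⟩
  set p := round (θ / (2 * Real.pi)) with hp
  set x := θ - 2 * Real.pi * p with hx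
  have h1 : |x| ≤ Real.pi := by
    have := abs_sub_round (θ / (2 * Real.pi))
    rw [← hp] at this
    have e : x = 2 * Real.pi * (θ / (2 * Real.pi) - p) := by rw [hx]; field_simp
    rw [e, abs_mul, abs_of_pos (by positivity)]
    nlinarith
  have h2 : Complex.exp ((θ : ℝ) * Complex.I) = Complex.exp (Complex.I * (x:ℝ)) := by
    rw [show ((θ : ℝ) : ℂ) * Complex.I = Complex.I * (x:ℝ) + p * (2 * Real.pi * Complex.I) by
      rw [hx]; push_cast; ring]
    rw [Complex.exp_add, Complex.exp_int_mul_two_pi_mul_I, mul_one]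
  rw [h2, Complex.norm_exp_I_mul_ofReal_sub_one] at h
  have h3 := Real.mul_abs_le_abs_sin (x := x / 2) (by rw [abs_div]; simp; linarith)
  rw [Real.norm_eq_abs, abs_mul] at h
  simp only [Nat.abs_ofNat] at h
  rw [abs_div] at h3
  simp only [Nat.abs_ofNat] at h3
  have h4 : 2 / Real.pi * (|x| / 2) = |x| / Real.pi := by ring
  rw [h4, div_le_iff₀ hpi] at h3
  nlinarith

lemma bad_cover {t : ℝ} (h0 : 0 ≤ t) (h1 : t ≤ 1) {m : ℕ} (hm : 1 ≤ m) (hg : ¬ Good t m) :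
    ∃ p ∈ Finset.range (3 ^ m + 1), ∃ q ∈ Finset.range (3 ^ m + 1),
      t ∈ Set.Icc ((q : ℝ) / p - 9 * (1/81) ^ m) ((q : ℝ) / p + 9 * (1/81) ^ m) := by
  unfold Good at hg
  push Not at hg
  obtain ⟨y, hy0, hy1, hy⟩ := hg
  set ε : ℝ := (1/81) ^ m with hε
  have hε0 : 0 < ε := by positivity
  have hε1 : ε ≤ 1/81 := by
    calc ε ≤ (1/81) ^ 1 := pow_le_pow_of_le_one (by norm_num) (by norm_num) hm
      _ = _ := by norm_num
  have hu := (cube_u t y).trans (mul_le_mul_of_nonneg_left hy.le (by norm_num))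
  have hv := (cube_v t y).trans (mul_le_mul_of_nonneg_left hy.le (by norm_num))
  rw [← Complex.exp_nat_mul] at hu hv
  rw [show ((3:ℕ):ℂ) * ((t * y : ℝ) * Complex.I) = ((3 * (t * y) : ℝ) : ℂ) * Complex.I by push_cast; ring] at hu
  rw [show ((3:ℕ):ℂ) * ((y : ℝ) * Complex.I) = ((3 * y : ℝ) : ℂ) * Complex.I by push_cast; ring] at hv
  obtain ⟨q, hq⟩ := near_int hu
  obtain ⟨p, hp⟩ := near_int hv
  have hpi := Real.pi_gt_three
  have hpi2 := Real.pi_lt_four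
  have hδ1 : Real.pi / 2 * (18 * ε) ≤ 1 := by nlinarith
  have h3m : (3:ℝ) ≤ 3 ^ m := by
    calc (3:ℝ) = 3 ^ 1 := by norm_num
      _ ≤ 3 ^ m := pow_le_pow_right₀ (by norm_num) hm
  have hp' := abs_le.1 hp
  have hq' := abs_le.1 hq
  have hy13 : 1 ≤ y := by
    by_contra hc
    push Not at hc
    have := phi_lower h0 h1 y
    nlinarith
  have hp1 : 1 ≤ p := by
    have : (0:ℝ) < p := by nlinarith
    have : 0 < p := by exact_mod_cast this
    omega
  have hty0 : 0 ≤ t * y := by positivity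
  have hty1 : t * y ≤ y := by nlinarith
  have hq0 : 0 ≤ q := by
    have : (-1:ℝ) < q := by nlinarith
    have : -1 < q := by exact_mod_cast this
    omega
  have hp2 : p ≤ 3 ^ m := by
    have : (p:ℝ) ≤ 3 ^ m := by nlinarith
    exact_mod_cast this
  have hq2 : q ≤ 3 ^ m := by
    have : (q:ℝ) ≤ 3 ^ m := by nlinarith
    exact_mod_cast this
  lift p to ℕ using (by omega)
  lift q to ℕ using hq0
  refine ⟨p, Finset.mem_range.2 (Nat.lt_succ_of_le (by exact_mod_cast hp2)), q,
    Finset.mem_range.2 (Nat.lt_succ_of_le (by exact_mod_cast hq2)), ?_⟩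
  have hpR : (1:ℝ) ≤ p := by exact_mod_cast hp1
  push_cast at hp' hq'
  have key : |t - q / p| ≤ 9 * ε := by
    have e : t - q / p = (t * p - q) / p := by field_simp
    rw [e, abs_div, abs_of_pos (by linarith : (0:ℝ) < p), div_le_iff₀ (by linarith)]
    have : |t * p - q| ≤ 9 * ε := by
      have k1 : |2 * Real.pi * (t * p - q)| ≤ 2 * (Real.pi / 2 * (18 * ε)) := by
        have e2 : 2 * Real.pi * (t * p - q) = (3 * (t * y) - 2 * Real.pi * q) - t * (3 * y - 2 * Real.pi * p) := by ring
        rw [e2]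
        refine (abs_sub _ _).trans ?_
        rw [abs_mul, abs_of_nonneg h0]
        push_cast at hp hq
        nlinarith [abs_nonneg (3 * y - 2 * Real.pi * p)]
      rw [abs_mul, abs_of_pos (by positivity)] at k1
      have : 2 * Real.pi * |t * p - q| ≤ 2 * Real.pi * (9 * ε) := by linarith
      exact le_of_mul_le_mul_left this (by positivity)
    nlinarith
  have := abs_le.1 key
  constructor <;> linarith

lemma bad_meas {m : ℕ} (hm : 1 ≤ m) : volume {t : ℝ | t ∈ Set.Icc (0:ℝ) 1 ∧ ¬ Good t m} ≤
    ENNReal.ofReal (72 / 9 ^ m) := by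
  calc _ ≤ volume (⋃ p ∈ Finset.range (3 ^ m + 1), ⋃ q ∈ Finset.range (3 ^ m + 1),
      Set.Icc ((q : ℝ) / p - 9 * (1/81) ^ m) ((q : ℝ) / p + 9 * (1/81) ^ m)) := by
        apply measure_mono
        rintro t ⟨ht, hg⟩
        obtain ⟨p, hp, q, hq, h⟩ := bad_cover ht.1 ht.2 hm hg
        simp only [Set.mem_iUnion]
        exact ⟨p, hp, q, hq, h⟩
    _ ≤ ∑ p ∈ Finset.range (3 ^ m + 1), ∑ q ∈ Finset.range (3 ^ m + 1), ENNReal.ofReal (18 * (1/81) ^ m) := by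
        refine (measure_biUnion_finset_le _ _).trans (Finset.sum_le_sum fun p _ => ?_)
        refine (measure_biUnion_finset_le _ _).trans (Finset.sum_le_sum fun q _ => ?_)
        rw [Real.volume_Icc]
        apply ENNReal.ofReal_le_ofReal
        linarith
    _ ≤ _ := by
        rw [Finset.sum_const, Finset.sum_const, Finset.card_range, smul_smul, nsmul_eq_mul,
          ← ENNReal.ofReal_natCast, ← ENNReal.ofReal_mul (by positivity)]
        apply ENNReal.ofReal_le_ofReal
        push_cast
        have h3 : (1:ℝ) ≤ 3 ^ m := one_le_pow₀ (by norm_num)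
        have e : (9:ℝ) ^ m = 3 ^ m * 3 ^ m := by rw [← mul_pow]; norm_num
        have e' : (81:ℝ) ^ m = 3 ^ m * 3 ^ m * (3 ^ m * 3 ^ m) := by rw [← mul_pow, ← mul_pow]; norm_num
        rw [one_div, inv_pow, e, e', ← div_eq_mul_inv, ← mul_div_assoc, div_le_div_iff₀ (by positivity) (by positivity)]
        set z : ℝ := 3 ^ m
        have : (z + 1) * (z + 1) ≤ 4 * (z * z) := by nlinarith
        have hz : 0 ≤ 18 * (z * z) := by positivity
        calc _ = (z + 1) * (z + 1) * (18 * (z * z)) := by ring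
          _ ≤ 4 * (z * z) * (18 * (z * z)) := by gcongr
          _ = _ := by ring

end BD

namespace BD
open scoped ENNReal

lemma T_sub (t : ℝ) (N κ : ℕ) (K : ℝ) (hκ : K ≤ κ) :
    (⋃ k, T t N κ k) ⊆ {s : ℝ | K ≤ (multFnStar t N s : ℝ)} := by
  intro s hs
  obtain ⟨k, hk, h⟩ := Set.mem_iUnion.1 hs
  have h2 : multFn t k s ≤ multFnStar t N s :=
    Finset.le_sup (f := fun n => multFn t n s) (Finset.mem_range.2 (Nat.lt_succ_of_le hk))
  have h3 : κ ≤ multFnStar t N s := (h.trans (nu_le_multFn t k s)).trans h2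
  exact hκ.trans (by exact_mod_cast h3)

lemma not_good {C : ℝ} (hC0 : 0 < C) (hC : ∀ (t : ℝ) (n : ℕ) (B : ℝ), 0 ≤ B →
    ∫⁻ s, (multFn t n s : ℝ≥0∞)^2 ≤ ENNReal.ofReal B →
    ∫ ξ in (0:ℝ)..(3 ^ n), ‖P t n ξ‖ ^ 2 ≤ C * B)
    {N m : ℕ} {K : ℝ} (hK : 2000 ≤ K) (hKC : 200 * C ≤ K) (hKm : K ^ 5 ≤ 3 * 3 ^ m)
    (hN : 3 ^ (20 * m) ≤ N) {t : ℝ} (h0 : 0 ≤ t) (h1 : t ≤ 1)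
    (hv : volume {s : ℝ | K ≤ (multFnStar t N s : ℝ)} ≤ ENNReal.ofReal ((K ^ 3)⁻¹)) :
    ¬ Good t m := by
  intro hg
  have hK0 : 0 < K := by linarith
  set κ := ⌈K⌉₊ with hκd
  have hκ1 : K ≤ κ := Nat.le_ceil K
  have hκ2 : (κ:ℝ) ≤ 2 * K := by
    have := Nat.ceil_lt_add_one hK0.le
    linarith
  have hκ : 2 ≤ κ := by
    have : (2:ℝ) ≤ κ := by linarith
    exact_mod_cast this
  have hA : 486 * (κ:ℝ≥0∞)^2 * volume (⋃ k, T t N κ k) ≤ 1 := by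
    calc 486 * (κ:ℝ≥0∞)^2 * volume (⋃ k, T t N κ k)
        ≤ 486 * (κ:ℝ≥0∞)^2 * ENNReal.ofReal ((K ^ 3)⁻¹) := by
          gcongr
          exact (measure_mono (T_sub t N κ K hκ1)).trans hv
      _ = ENNReal.ofReal (486 * (κ:ℝ)^2 * (K ^ 3)⁻¹) := by
          rw [ENNReal.ofReal_mul (by positivity), ENNReal.ofReal_mul (by positivity),
            ENNReal.ofReal_pow (by positivity), ENNReal.ofReal_natCast]
          norm_num
      _ ≤ 1 := by
          rw [ENNReal.ofReal_le_one, ← div_eq_mul_inv, div_le_one (by positivity)]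
          have h : (κ:ℝ)^2 ≤ (2 * K)^2 := by gcongr
          calc 486 * (κ:ℝ)^2 ≤ 2000 * K^2 := by nlinarith [sq_nonneg K]
            _ ≤ K * K^2 := by gcongr
            _ = K^3 := by ring
  have hD : ∀ n ≤ N, ∫ ξ in (0:ℝ)..(3 ^ n), ‖P t n ξ‖ ^ 2 ≤ C * (24 * K) := by
    intro n hn
    refine hC t n _ (by positivity) ((L2_bound h0 h1 hκ hA n hn).trans ?_)
    calc (12:ℝ≥0∞) * κ = ENNReal.ofReal (12 * κ) := by
          rw [ENNReal.ofReal_mul (by positivity), ENNReal.ofReal_natCast]; norm_num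
      _ ≤ _ := ENNReal.ofReal_le_ofReal (by linarith)
  have hDK : C * (24 * K) ≤ K ^ 2 := by nlinarith
  have hK5 : 8000 * K ^ 2 ≤ K ^ 5 := by
    have : (2000:ℝ) ^ 3 ≤ K ^ 3 := by gcongr
    have h2 : (0:ℝ) ≤ K ^ 2 := by positivity
    calc 8000 * K ^ 2 ≤ K ^ 3 * K ^ 2 := by
          apply mul_le_mul_of_nonneg_right _ h2
          refine le_trans ?_ this
          norm_num
      _ = K ^ 5 := by ring
  have hK2 : 1 ≤ K ^ 2 := by nlinarith
  have hmZ : 2 * (C * (24 * K)) + 2 ≤ 3 ^ m := by linarith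
  have hM : 3 ^ (19 * m) * m ≤ N := by
    refine le_trans ?_ hN
    calc 3 ^ (19 * m) * m ≤ 3 ^ (19 * m) * 3 ^ m := by
          gcongr
          exact (Nat.lt_pow_self (by norm_num)).le
      _ = 3 ^ (20 * m) := by rw [← pow_add]; congr 1; ring
  have hf := main_contra h0 h1 hg hD hmZ hM
  have e : ((3 ^ (19 * m) : ℕ) : ℝ) * ((1/81 : ℝ) ^ (4 * m) / 16) = (3 ^ m) ^ 3 / 16 := by
    have e1 : (1/81 : ℝ) ^ (4 * m) = 1 / ((3:ℝ) ^ m) ^ 16 := by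
      rw [div_pow, one_pow, show (81:ℝ) = 3 ^ 4 by norm_num, ← pow_mul, ← pow_mul]
      congr 2; ring
    have e2 : ((3 ^ (19 * m) : ℕ) : ℝ) = ((3:ℝ) ^ m) ^ 19 := by
      push_cast
      rw [← pow_mul]; congr 1; ring
    rw [e1, e2]
    have : (3:ℝ) ^ m ≠ 0 := by positivity
    field_simp
  rw [e] at hf
  have hZ : 2000 * K ^ 2 ≤ (3:ℝ) ^ m := by linarith
  have hZ1 : (2000:ℝ) ≤ 3 ^ m := by linarith
  have : (2000:ℝ) * 2000 * 3 ^ m ≤ (3 ^ m) ^ 3 := by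
    calc (2000:ℝ) * 2000 * 3 ^ m ≤ 3 ^ m * 3 ^ m * 3 ^ m := by gcongr
      _ = _ := by ring
  linarith

end BD

/-- For `K = N^{ε₀}`, the set of parameters `t ∈ [0,1]` whose level set
`{f_N^* ≥ K}` has measure at most `K⁻³` has measure less than `N^{-ε₀}`. -/
theorem measure_of_bad_directions :
    ∃ ε₀ > (0:ℝ), ∃ N₀ : ℕ, ∀ N : ℕ, N₀ ≤ N →
      volume {t ∈ Set.Icc (0:ℝ) 1 |
          volume {s : ℝ | ((N : ℝ) ^ ε₀) ≤ (multFnStar t N s : ℝ)}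
            ≤ ENNReal.ofReal ((((N : ℝ) ^ ε₀) ^ 3)⁻¹)}
        < ENNReal.ofReal ((N : ℝ) ^ (-ε₀)) := by
  obtain ⟨C, hC0, hC⟩ := BD.upper_int
  refine ⟨1/100, by norm_num, ?_⟩
  set K₀ : ℝ := 2000 + 200 * C with hK₀
  have hK₀0 : 0 ≤ K₀ := by positivity
  refine ⟨⌈K₀ ^ 100⌉₊, ?_⟩
  intro N hN
  have hN1 : K₀ ^ 100 ≤ (N:ℝ) := (Nat.le_ceil _).trans (by exact_mod_cast hN)
  rw [Real.rpow_neg (Nat.cast_nonneg N)]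
  set K : ℝ := (N:ℝ) ^ (1/100 : ℝ) with hKd
  have hKN : K ^ 100 = N := by
    rw [hKd, ← Real.rpow_natCast, ← Real.rpow_mul (Nat.cast_nonneg N)]
    norm_num
  have hKnn : 0 ≤ K := by positivity
  have hKK : K₀ ≤ K := by
    rw [← hKN] at hN1
    exact le_of_pow_le_pow_left₀ (by norm_num) hKnn hN1
  have hK2 : 2000 ≤ K := by linarith
  have hK3 : 200 * C ≤ K := by linarith
  have hK0 : 0 < K := by linarith
  have hNne : N ≠ 0 := by
    rintro rfl
    have : (0:ℝ) < K ^ 100 := by positivity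
    rw [hKN] at this
    simp at this
  set m := Nat.log 3 N / 20 with hm
  have hNm : 3 ^ (20 * m) ≤ N := by
    refine le_trans ?_ (Nat.pow_log_le_self 3 hNne)
    exact Nat.pow_le_pow_right (by norm_num) (Nat.mul_div_le _ _)
  have hNm2 : N < 3 ^ (20 * (m + 1)) := by
    refine lt_of_lt_of_le (Nat.lt_pow_succ_log_self (b := 3) (by norm_num) N) ?_
    exact Nat.pow_le_pow_right (by norm_num) (by omega)
  have hKm : K ^ 5 ≤ 3 * 3 ^ m := by
    have h : (K ^ 5) ^ 20 ≤ (3 * 3 ^ m) ^ 20 := by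
      calc (K ^ 5) ^ 20 = K ^ 100 := by rw [← pow_mul]
        _ = (N:ℝ) := hKN
        _ ≤ ((3 ^ (20 * (m + 1)) : ℕ) : ℝ) := by exact_mod_cast hNm2.le
        _ = (3 * 3 ^ m) ^ 20 := by
          push_cast
          rw [← pow_succ', ← pow_mul]
          congr 1; ring
    exact le_of_pow_le_pow_left₀ (by norm_num) (by positivity) h
  have hZ : 9 * K < (3:ℝ) ^ m := by
    have : (2000:ℝ) ^ 4 ≤ K ^ 4 := by gcongr
    have : (2000:ℝ) ^ 4 * K ≤ K ^ 4 * K := by gcongr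
    have e : K ^ 4 * K = K ^ 5 := by ring
    rw [e] at this
    norm_num at this
    linarith
  have hm1 : 1 ≤ m := by
    by_contra hc
    have : m = 0 := by omega
    rw [this] at hZ
    norm_num at hZ
    linarith
  refine lt_of_le_of_lt (le_trans (measure_mono ?_) (BD.bad_meas hm1)) ?_
  · rintro t ⟨ht, hv⟩
    exact ⟨ht, BD.not_good hC0 hC hK2 hK3 hKm hNm ht.1 ht.2 hv⟩
  · rw [ENNReal.ofReal_lt_ofReal_iff (by positivity)]
    have e : (9:ℝ) ^ m = 3 ^ m * 3 ^ m := by rw [← mul_pow]; norm_num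
    rw [e, ← one_div, div_lt_div_iff₀ (by positivity) hK0]
    have : (9 * K) * (9 * K) ≤ (3:ℝ) ^ m * 3 ^ m := by gcongr
    have h2 : 2000 * K ≤ K * K := by gcongr
    have e2 : (9 * K) * (9 * K) = 81 * (K * K) := by ring
    rw [e2] at this
    linarith
end

section
/- There is an absolute constant C > 0 such that for every integer N ≥ 1, every real K ≥ 2, every real β ≥ 3, and every t ∈ [0,1]: if the Lebesgue measure of { s ∈ ℝ : max_{0 ≤ n ≤ N} f_{n,t}(s) ≥ K } is strictly greater than K^{-3}, then for M := ⌈N·K^β⌉ the Lebesgue measure of { s ∈ ℝ : f_{M,t}(s) ≥ 1 } (the support of f_{M,t}) is at most C/K. -/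
open MeasureTheory

noncomputable def Sm (t : ℝ) (n : ℕ) (a : Fin n → Fin 3) : ℝ :=
  ∑ k : Fin n, wgt t (a k) * (3 : ℝ) ^ (-(k.1 + 1 : ℤ))

def Xs (t : ℝ) (n : ℕ) : Set ℝ := {s | 1 ≤ multFn t n s}

lemma wgt_nonneg {t : ℝ} (ht : t ∈ Set.Icc (0:ℝ) 1) (i : Fin 3) : 0 ≤ wgt t i := by
  fin_cases i <;> simp [wgt, ht.1]

lemma wgt_le {t : ℝ} (ht : t ∈ Set.Icc (0:ℝ) 1) (i : Fin 3) : wgt t i ≤ 1 := by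
  fin_cases i <;> simp [wgt, ht.2]

lemma Sm_nonneg {t : ℝ} (ht : t ∈ Set.Icc (0:ℝ) 1) (n : ℕ) (a : Fin n → Fin 3) :
    0 ≤ Sm t n a :=
  Finset.sum_nonneg fun i _ => mul_nonneg (wgt_nonneg ht _) (by positivity)

lemma Sm_le {t : ℝ} (ht : t ∈ Set.Icc (0:ℝ) 1) (n : ℕ) (a : Fin n → Fin 3) :
    Sm t n a ≤ 1 - (3:ℝ) ^ (-(n:ℤ)) := by
  induction n with
  | zero => simp [Sm]
  | succ n ih =>
    have h := ih (fun i => a i.castSucc)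
    unfold Sm at h ⊢
    rw [Fin.sum_univ_castSucc]
    have h1 : wgt t (a (Fin.last n)) * (3 : ℝ) ^ (-(((Fin.last n).1:ℕ) + 1 : ℤ))
        ≤ 1 * (3 : ℝ) ^ (-(((Fin.last n).1:ℕ) + 1 : ℤ)) :=
      mul_le_mul_of_nonneg_right (wgt_le ht _) (by positivity)
    have h2 : (3:ℝ) ^ (-(n:ℤ)) = 3 * (3:ℝ) ^ (-((n:ℤ) + 1)) := by
      rw [← zpow_one_add₀ (by norm_num)]; congr 1; ring
    have h3 : (0:ℝ) < (3:ℝ) ^ (-((n:ℤ) + 1)) := by positivity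
    simp only [Fin.val_last, Fin.val_castSucc] at h1 ⊢
    push_cast
    linarith

lemma Sm_split (t : ℝ) (n m : ℕ) (w : Fin (n + m) → Fin 3) :
    Sm t (n + m) w = Sm t n (fun i => w (Fin.castAdd m i)) +
      (3:ℝ) ^ (-(n:ℤ)) * Sm t m (fun i => w (Fin.natAdd n i)) := by
  unfold Sm
  rw [Fin.sum_univ_add, Finset.mul_sum]
  congr 1
  apply Finset.sum_congr rfl
  intro i _
  have : (3:ℝ) ^ (-(((Fin.natAdd n i).1 : ℕ) + 1 : ℤ))
      = (3:ℝ) ^ (-(n:ℤ)) * (3:ℝ) ^ (-((i.1:ℕ) + 1 : ℤ)) := by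
    rw [← zpow_add₀ (by norm_num)]; congr 1; simp; ring
  rw [this]; ring

lemma three_split (n m : ℕ) :
    (3:ℝ) ^ (-((n + m : ℕ):ℤ)) = (3:ℝ) ^ (-(n:ℤ)) * (3:ℝ) ^ (-(m:ℤ)) := by
  rw [← zpow_add₀ (by norm_num)]; congr 1; push_cast; ring

lemma trunc {t : ℝ} (ht : t ∈ Set.Icc (0:ℝ) 1) {n N : ℕ} (h : n ≤ N) (w : Fin N → Fin 3) (s : ℝ)
    (hs : |s - Sm t N w| ≤ (3:ℝ) ^ (-(N:ℤ))) :
    |s - Sm t n (fun i => w (Fin.castLE h i))| ≤ (3:ℝ) ^ (-(n:ℤ)) := by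
  obtain ⟨m, rfl⟩ := Nat.exists_eq_add_of_le h
  rw [Sm_split, three_split] at hs
  change |s - Sm t n (fun i => w (Fin.castAdd m i))| ≤ _
  have h1 := Sm_le ht m (fun i => w (Fin.natAdd n i))
  have h0 := Sm_nonneg ht m (fun i => w (Fin.natAdd n i))
  have hp : (0:ℝ) < (3:ℝ) ^ (-(n:ℤ)) := by positivity
  have hq : (0:ℝ) < (3:ℝ) ^ (-(m:ℤ)) := by positivity
  have e1 := mul_le_mul_of_nonneg_left h1 hp.le
  have e0 := mul_nonneg hp.le h0
  rw [abs_le] at hs ⊢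
  have := mul_pos hp hq
  constructor <;> nlinarith

lemma mem_Xs {t : ℝ} {n : ℕ} {s : ℝ} :
    s ∈ Xs t n ↔ ∃ a : Fin n → Fin 3, |s - Sm t n a| ≤ (3:ℝ) ^ (-(n:ℤ)) := by
  unfold Xs multFn Sm
  rw [Set.mem_ofPred_eq, Nat.one_le_iff_ne_zero, ← Nat.pos_iff_ne_zero, Finset.card_pos]
  simp [Finset.Nonempty]

lemma Xs_anti {t : ℝ} (ht : t ∈ Set.Icc (0:ℝ) 1) {n N : ℕ} (h : n ≤ N) : Xs t N ⊆ Xs t n := by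
  intro s hs
  rw [mem_Xs] at hs ⊢
  obtain ⟨w, hw⟩ := hs
  exact ⟨_, trunc ht h w s hw⟩

lemma Xs_zero (t : ℝ) : Xs t 0 = Set.Icc (-1) 1 := by
  ext s
  rw [mem_Xs]
  simp [Sm, abs_le]

lemma Xs_fin {t : ℝ} (ht : t ∈ Set.Icc (0:ℝ) 1) (n : ℕ) : volume (Xs t n) ≠ ⊤ := by
  refine ne_top_of_le_ne_top ?_ (measure_mono (Xs_anti ht (Nat.zero_le n)))
  rw [Xs_zero]; simp

/-- words of length `N` whose length-`n` prefix is counted at `s` -/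
noncomputable def Tw (t : ℝ) (N n : ℕ) (h : n ≤ N) (s : ℝ) : Finset (Fin N → Fin 3) := by
  classical exact Finset.univ.filter (fun w : Fin N → Fin 3 =>
    (|s - Sm t n (fun i => w (Fin.castLE h i))| ≤ (3:ℝ) ^ (-(n:ℤ))))

lemma Tw_card (t : ℝ) (N n : ℕ) (h : n ≤ N) (s : ℝ) :
    ((Tw t N n h s).card : ℝ) = multFn t n s * (3:ℝ) ^ (-(n:ℤ)) * 3 ^ N := by
  classical
  obtain ⟨m, rfl⟩ := Nat.exists_eq_add_of_le h
  have key : (Tw t (n + m) n h s).card = multFn t n s * 3 ^ m := by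
    have : (3:ℕ) ^ m = (Finset.univ : Finset (Fin m → Fin 3)).card := by simp
    rw [this]
    unfold multFn
    rw [← Finset.card_product]
    symm
    apply Finset.card_equiv (Fin.appendEquiv n m)
    rintro ⟨a, b⟩
    have hc : ∀ i : Fin n, Fin.castLE h i = Fin.castAdd m i := fun i => rfl
    simp [Tw, Sm, Fin.appendEquiv, hc]
  rw [key, zpow_neg, zpow_natCast, pow_add]
  push_cast
  field_simp

lemma vol_aff (X : Set ℝ) (N : ℕ) (c : ℝ) :
    volume.real ((fun s : ℝ => (3:ℝ) ^ N * (s - c)) ⁻¹' X) = volume.real X / 3 ^ N := by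
  have : (fun s : ℝ => (3:ℝ) ^ N * (s - c)) ⁻¹' X
      = (fun s : ℝ => s + (-c)) ⁻¹' ((fun s : ℝ => (3:ℝ) ^ N * s) ⁻¹' X) := by
    ext s; simp [sub_eq_add_neg]
  rw [this, Measure.real, measure_preimage_add_right, Real.volume_preimage_mul_left (by positivity),
    ENNReal.toReal_mul, ENNReal.toReal_ofReal (abs_nonneg _), abs_of_pos (by positivity), Measure.real]
  field_simp

lemma key_step {t : ℝ} (ht : t ∈ Set.Icc (0:ℝ) 1) {N : ℕ} {K : ℝ} (hK : 2 ≤ K)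
    (hE : ENNReal.ofReal ((K ^ 3)⁻¹) < volume {s : ℝ | K ≤ (multFnStar t N s : ℝ)}) :
    ∃ δ : ℝ, (K ^ 2)⁻¹ / 20 ≤ δ ∧ δ ≤ 1 ∧ ∀ m : ℕ,
      volume.real (Xs t (N + m)) ≤ 4 / K * δ + (1 - δ) * volume.real (Xs t m) := by
  classical
  set E := {s : ℝ | K ≤ (multFnStar t N s : ℝ)} with hEdef
  have hex : ∀ s : ℝ, ∃ n, n ≤ N ∧ (s ∈ E → K ≤ (multFn t n s : ℝ)) := by
    intro s
    obtain ⟨n, hn, h⟩ := Finset.exists_mem_eq_sup (Finset.range (N + 1)) ⟨0, by simp⟩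
      (fun n => multFn t n s)
    refine ⟨n, by simpa [Nat.lt_succ_iff] using hn, fun hs => ?_⟩
    have : K ≤ (multFnStar t N s : ℝ) := hs
    rwa [multFnStar, h] at this
  choose n hnN hn using hex
  obtain ⟨u, huE, hud, hcov⟩ := Vitali.exists_disjoint_subfamily_covering_enlargement_closedBall
    E (fun s => s) (fun s => 2 * (3:ℝ) ^ (-(n s:ℤ))) 2 (by
      intro s _
      have : (3:ℝ) ^ (-(n s:ℤ)) ≤ 1 := by
        rw [zpow_neg, zpow_natCast]
        exact inv_le_one_of_one_le₀ (one_le_pow₀ (by norm_num))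
      show 2 * (3:ℝ) ^ (-(n s:ℤ)) ≤ 2
      linarith) 5 (by norm_num)
  have hpos : ∀ s : ℝ, (0:ℝ) < (3:ℝ) ^ (-(n s:ℤ)) := fun s => by positivity
  set T : ℝ → Finset (Fin N → Fin 3) := fun s => Tw t N (n s) (hnN s) s with hT
  have hTmem : ∀ s w, w ∈ T s ↔
      |s - Sm t (n s) (fun i => w (Fin.castLE (hnN s) i))| ≤ (3:ℝ) ^ (-(n s:ℤ)) := by
    intro s w; simp [hT, Tw]
  have hball : ∀ s w x, w ∈ T s → |x - Sm t N w| ≤ (3:ℝ) ^ (-(N:ℤ)) →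
      x ∈ Metric.closedBall s (2 * (3:ℝ) ^ (-(n s:ℤ))) := by
    intro s w x hw hx
    have h1 := trunc ht (hnN s) w x hx
    have h2 := (hTmem s w).1 hw
    rw [Metric.mem_closedBall, Real.dist_eq]
    rw [abs_le] at *
    constructor <;> linarith [h1.1, h1.2, h2.1, h2.2]
  have hTd : u.PairwiseDisjoint T := by
    intro a ha b hb hab
    rw [Function.onFun, Finset.disjoint_left]
    intro w h1 h2
    have h0 : |Sm t N w - Sm t N w| ≤ (3:ℝ) ^ (-(N:ℤ)) := by simp
    exact Set.disjoint_left.1 (hud ha hb hab) (hball a w _ h1 h0) (hball b w _ h2 h0)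
  have hTc : ∀ s ∈ u, K * (3:ℝ) ^ (-(n s:ℤ)) * 3 ^ N ≤ ((T s).card : ℝ) := by
    intro s hs
    rw [hT]
    simp only [Tw_card]
    have := hn s (huE hs)
    have := hpos s
    gcongr
  have hTne : ∀ s ∈ u, (T s).Nonempty := by
    intro s hs
    rw [← Finset.card_pos]
    have h1 := hTc s hs
    have h2 := hpos s
    have : (0:ℝ) < K * (3:ℝ) ^ (-(n s:ℤ)) * 3 ^ N := by positivity
    exact_mod_cast this.trans_le h1
  have hufin : u.Finite := by
    choose g hg using hTne
    have hinj : Function.Injective (fun x : u => g x.1 x.2) := by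
      intro x y hxy
      by_contra hne
      have hne' : x.1 ≠ y.1 := fun h => hne (Subtype.ext h)
      have := Finset.disjoint_left.1 (hTd x.2 y.2 hne') (hg x.1 x.2)
      apply this
      have hxy' : g x.1 x.2 = g y.1 y.2 := hxy
      rw [hxy']; exact hg _ _
    have : Finite u := Finite.of_injective _ hinj
    exact Set.toFinite u
  lift u to Finset ℝ using hufin
  set Q : ℝ := ∑ s ∈ u, (3:ℝ) ^ (-(n s:ℤ)) with hQ
  set G := u.biUnion T with hG
  have hGc : (G.card : ℝ) = ∑ s ∈ u, ((T s).card : ℝ) := by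
    rw [hG, Finset.card_biUnion hTd]; push_cast; rfl
  have h3 : (0:ℝ) < 3 ^ N := by positivity
  have hGQ : K * Q ≤ G.card / 3 ^ N := by
    rw [le_div_iff₀ h3, hGc, hQ, Finset.mul_sum, Finset.sum_mul]
    exact Finset.sum_le_sum hTc
  have hEQ : (K ^ 3)⁻¹ ≤ 20 * Q := by
    have hsub : E ⊆ ⋃ s ∈ u, Metric.closedBall s (5 * (2 * (3:ℝ) ^ (-(n s:ℤ)))) := by
      intro s hs
      obtain ⟨b, hb, h⟩ := hcov s hs
      simp only [Set.mem_iUnion]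
      exact ⟨b, hb, h (Metric.mem_closedBall_self (by have := hpos s; positivity))⟩
    have h1 : volume E ≤ ENNReal.ofReal (20 * Q) := by
      refine (measure_mono hsub).trans ((measure_biUnion_finset_le _ _).trans ?_)
      rw [hQ, Finset.mul_sum, ENNReal.ofReal_sum_of_nonneg (fun s _ => by positivity)]
      apply Finset.sum_le_sum
      intro s _
      rw [Real.volume_closedBall]
      apply ENNReal.ofReal_le_ofReal
      linarith
    have h2 := (hE.trans_le h1).le
    rwa [ENNReal.ofReal_le_ofReal_iff (by
      rw [hQ]; exact mul_nonneg (by norm_num) (Finset.sum_nonneg fun s _ => (hpos s).le))] at h2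
  refine ⟨G.card / 3 ^ N, ?_, ?_, ?_⟩
  · refine le_trans ?_ hGQ
    have : (K^2)⁻¹ = K * (K^3)⁻¹ := by field_simp
    rw [this]
    nlinarith
  · rw [div_le_one h3]
    have := Finset.card_le_univ G
    simp at this
    exact_mod_cast this
  · intro m
    have hsub : Xs t (N + m) ⊆ (⋃ s ∈ u, Metric.closedBall s (2 * (3:ℝ) ^ (-(n s:ℤ)))) ∪
        ⋃ w ∈ Gᶜ, (fun s : ℝ => (3:ℝ) ^ N * (s - Sm t N w)) ⁻¹' Xs t m := by
      intro x hx
      rw [mem_Xs] at hx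
      obtain ⟨w, hw⟩ := hx
      set w1 : Fin N → Fin 3 := fun i => w (Fin.castAdd m i) with hw1
      by_cases hG1 : w1 ∈ G
      · left
        rw [hG, Finset.mem_biUnion] at hG1
        obtain ⟨s, hs, hws⟩ := hG1
        simp only [Set.mem_iUnion]
        exact ⟨s, hs, hball s w1 x hws (trunc ht (Nat.le_add_right N m) w x hw)⟩
      · right
        simp only [Set.mem_iUnion]
        refine ⟨w1, Finset.mem_compl.2 hG1, ?_⟩
        rw [Set.mem_preimage, mem_Xs]
        refine ⟨fun i => w (Fin.natAdd N i), ?_⟩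
        rw [Sm_split, three_split] at hw
        have e : (3:ℝ) ^ N * (x - Sm t N w1) - Sm t m (fun i => w (Fin.natAdd N i)) =
            3 ^ N * (x - (Sm t N w1 + (3:ℝ) ^ (-(N:ℤ)) * Sm t m (fun i => w (Fin.natAdd N i)))) := by
          rw [zpow_neg, zpow_natCast]; field_simp; ring
        rw [e, abs_mul, abs_of_pos h3]
        refine (mul_le_mul_of_nonneg_left hw h3.le).trans (le_of_eq ?_)
        rw [zpow_neg (3:ℝ) (N:ℤ), zpow_natCast]; field_simp
    have hv1 : volume.real (⋃ s ∈ u, Metric.closedBall s (2 * (3:ℝ) ^ (-(n s:ℤ)))) ≤ 4 * Q := by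
      refine (measureReal_biUnion_finset_le _ _).trans ?_
      rw [hQ, Finset.mul_sum]
      apply Finset.sum_le_sum
      intro s _
      have := hpos s
      rw [Measure.real, Real.volume_closedBall, ENNReal.toReal_ofReal (by positivity)]
      linarith
    have hv2 : volume.real (⋃ w ∈ Gᶜ, (fun s : ℝ => (3:ℝ) ^ N * (s - Sm t N w)) ⁻¹' Xs t m)
        ≤ (1 - G.card / 3 ^ N) * volume.real (Xs t m) := by
      refine (measureReal_biUnion_finset_le _ _).trans ?_
      simp only [vol_aff, Finset.sum_const, nsmul_eq_mul]
      have : ((Gᶜ).card : ℝ) = 3 ^ N - G.card := by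
        rw [Finset.card_compl, Nat.cast_sub (Finset.card_le_univ G)]; simp
      rw [this]
      apply le_of_eq
      field_simp
    have hfin : volume ((⋃ s ∈ u, Metric.closedBall s (2 * (3:ℝ) ^ (-(n s:ℤ)))) ∪
        ⋃ w ∈ Gᶜ, (fun s : ℝ => (3:ℝ) ^ N * (s - Sm t N w)) ⁻¹' Xs t m) ≠ ⊤ := by
      apply measure_union_ne_top
      · refine ne_top_of_le_ne_top ?_ (measure_biUnion_finset_le _ _)
        rw [ENNReal.sum_ne_top]
        intro s _
        rw [Real.volume_closedBall]
        exact ENNReal.ofReal_ne_top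
      · refine ne_top_of_le_ne_top ?_ (measure_biUnion_finset_le _ _)
        rw [ENNReal.sum_ne_top]
        intro w _
        have : (fun s : ℝ => (3:ℝ) ^ N * (s - Sm t N w)) ⁻¹' Xs t m
            = (fun s : ℝ => s + (-Sm t N w)) ⁻¹' ((fun s : ℝ => (3:ℝ) ^ N * s) ⁻¹' Xs t m) := by
          ext s; simp [sub_eq_add_neg]
        rw [this, measure_preimage_add_right, Real.volume_preimage_mul_left (by positivity)]
        exact ENNReal.mul_ne_top ENNReal.ofReal_ne_top (Xs_fin ht m)
    have hfinal := (measureReal_mono hsub hfin).trans (measureReal_union_le _ _)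
    have h4 : 4 * Q ≤ 4 / K * (G.card / 3 ^ N) := by
      have : 4 * Q = 4 / K * (K * Q) := by field_simp
      rw [this]
      gcongr
    linarith

lemma iter {t : ℝ} {N : ℕ} {A δ : ℝ} (hδ1 : δ ≤ 1) (hA : 0 ≤ A)
    (h : ∀ m : ℕ, volume.real (Xs t (N + m)) ≤ A * δ + (1 - δ) * volume.real (Xs t m)) (l : ℕ) :
    volume.real (Xs t (N * l)) ≤ A + (1 - δ) ^ l * 2 := by
  induction l with
  | zero =>
    rw [Nat.mul_zero, Xs_zero, Measure.real, Real.volume_Icc, ENNReal.toReal_ofReal (by norm_num)]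
    norm_num; linarith
  | succ l ih =>
    have h1 := h (N * l)
    rw [Nat.mul_succ, Nat.add_comm]
    have h2 := mul_le_mul_of_nonneg_left ih (sub_nonneg.2 hδ1)
    rw [pow_succ]
    linarith

/-- If the level set `{f_N^* ≥ K}` has measure greater than `K⁻³` (a "good"
direction), then the support of `f_{M,t}` for `M = ⌈N·K^β⌉` has measure at most `C/K`. -/
theorem support_small_for_good_directions :
    ∃ C > (0:ℝ), ∀ N : ℕ, 1 ≤ N → ∀ K : ℝ, 2 ≤ K → ∀ β : ℝ, 3 ≤ β →
      ∀ t ∈ Set.Icc (0:ℝ) 1,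
      ENNReal.ofReal ((K ^ 3)⁻¹) < volume {s : ℝ | K ≤ (multFnStar t N s : ℝ)} →
      volume {s : ℝ | 1 ≤ multFn t (⌈(N : ℝ) * K ^ β⌉₊) s} ≤ ENNReal.ofReal (C / K) := by
  refine ⟨100, by norm_num, ?_⟩
  intro N hN K hK β hβ t ht hE
  obtain ⟨δ, hδ, hδ1, hrec⟩ := key_step ht hK hE
  have hK0 : 0 < K := by linarith
  set l := ⌊K ^ β⌋₊ with hl
  have hKβ : K ^ 3 ≤ K ^ β := by
    rw [← Real.rpow_natCast K 3]
    exact Real.rpow_le_rpow_of_exponent_le (by linarith) (by exact_mod_cast hβ)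
  have hl1 : K ^ 3 / 2 ≤ l := by
    have h1 := Nat.lt_floor_add_one (K ^ β)
    have h2 : (2:ℝ) ^ 3 ≤ K ^ 3 := by gcongr
    rw [← hl] at h1
    linarith
  have hlM : N * l ≤ ⌈(N : ℝ) * K ^ β⌉₊ := by
    have h1 : (l:ℝ) ≤ K ^ β := Nat.floor_le (by positivity)
    have h2 : ((N * l : ℕ):ℝ) ≤ (N:ℝ) * K ^ β := by push_cast; gcongr
    exact_mod_cast h2.trans (Nat.le_ceil _)
  have hv := iter hδ1 (by positivity) hrec l
  have hδ0 : 0 < δ := lt_of_lt_of_le (by positivity) hδ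
  have hx : K / 40 ≤ δ * l := by
    have : K / 40 = (K ^ 2)⁻¹ / 20 * (K ^ 3 / 2) := by field_simp; norm_num
    rw [this]
    gcongr
  have hpow : (1 - δ) ^ l ≤ 40 / K := by
    have h1 : (1 - δ) ^ l ≤ Real.exp (-(δ * l)) := by
      have h2 : (1 - δ) ≤ Real.exp (-δ) := by linarith [Real.add_one_le_exp (-δ)]
      refine (pow_le_pow_left₀ (sub_nonneg.2 hδ1) h2 l).trans (le_of_eq ?_)
      rw [← Real.exp_nat_mul]; congr 1; ring
    refine h1.trans ?_
    rw [Real.exp_neg, ← inv_div]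
    apply inv_anti₀ (by positivity)
    linarith [Real.add_one_le_exp (δ * l)]
  have hfin : volume.real (Xs t (N * l)) ≤ 100 / K := by
    have e1 : 4 / K = 4 * (1 / K) := by ring
    have e2 : 40 / K = 40 * (1 / K) := by ring
    have e3 : 100 / K = 100 * (1 / K) := by ring
    have : 0 < 1 / K := by positivity
    rw [e3]; rw [e1] at hv; rw [e2] at hpow
    linarith
  refine (measure_mono (Xs_anti ht hlM)).trans ?_
  rw [← ENNReal.ofReal_toReal (Xs_fin ht (N * l))]
  exact ENNReal.ofReal_le_ofReal hfin
end

section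
/- There is an absolute constant C > 0 such that for every t ∈ [0,1], every integer N ≥ 0, and all reals K ≥ 1 and M ≥ 1 the following holds. Define, for L > 0, F_L := { s ∈ ℝ : max_{0 ≤ n ≤ N} f_{n,t}(s) > L }. Then |F_{4KM}| ≤ C · K · |F_K| · |F_M|, where |·| denotes Lebesgue measure. -/
open MeasureTheory

namespace LSS

noncomputable def X (t : ℝ) (n : ℕ) (a : Fin n → Fin 3) : ℝ :=
  ∑ k : Fin n, wgt t (a k) * (3 : ℝ) ^ (-(k.1 + 1 : ℤ))

open scoped Classical in
theorem multFn_eq (t : ℝ) (n : ℕ) (s : ℝ) :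
    multFn t n s = ∑ a : Fin n → Fin 3, if |s - X t n a| ≤ ((3 : ℝ) ^ n)⁻¹ then 1 else 0 := by
  rw [multFn, Finset.card_filter]
  simp only [X, zpow_neg, zpow_natCast]

theorem X_append (t : ℝ) (n m : ℕ) (a : Fin n → Fin 3) (b : Fin m → Fin 3) :
    X t (n + m) (Fin.append a b) = X t n a + ((3 : ℝ) ^ n)⁻¹ * X t m b := by
  unfold X
  rw [Fin.sum_univ_add, Finset.mul_sum]
  congr 1
  · simp
  · refine Finset.sum_congr rfl fun k _ => ?_
    have : (-(((Fin.natAdd n k).1 : ℕ) + 1 : ℤ)) = -(n : ℤ) + -(k.1 + 1 : ℤ) := by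
      simp; ring
    rw [Fin.append_right, this, zpow_add₀ (by norm_num), zpow_neg, zpow_natCast]
    ring

theorem split (t : ℝ) (n m : ℕ) (s : ℝ) :
    multFn t (n + m) s = ∑ a : Fin n → Fin 3, multFn t m ((3 : ℝ) ^ n * (s - X t n a)) := by
  classical
  simp only [multFn_eq]
  rw [← Fintype.sum_prod_type', ← (Fin.appendEquiv n m).sum_comp]
  refine Finset.sum_congr rfl fun p _ => ?_
  have h3 : (0 : ℝ) < 3 ^ n := by positivity
  have e : (Fin.appendEquiv n m) p = Fin.append p.1 p.2 := rfl
  have e2 : (3 : ℝ) ^ n * (s - X t n p.1) - X t m p.2 =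
      3 ^ n * (s - X t (n + m) (Fin.append p.1 p.2)) := by
    rw [X_append]; field_simp; ring
  rw [e, e2, abs_mul, abs_of_pos h3, pow_add, mul_inv]
  refine if_congr ?_ rfl rfl
  rw [← div_eq_inv_mul, le_div_iff₀' h3]

theorem X_bounds (t : ℝ) (ht : t ∈ Set.Icc (0 : ℝ) 1) (n : ℕ) (a : Fin n → Fin 3) :
    0 ≤ X t n a ∧ X t n a ≤ (1 - ((3 : ℝ) ^ n)⁻¹) / 2 := by
  have hw : ∀ d, 0 ≤ wgt t d ∧ wgt t d ≤ 1 := by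
    intro d
    fin_cases d <;> simp [wgt, ht.1, ht.2]
  constructor
  · exact Finset.sum_nonneg fun k _ => mul_nonneg (hw _).1 (by positivity)
  · have : X t n a ≤ ∑ k : Fin n, (3 : ℝ) ^ (-(k.1 + 1 : ℤ)) :=
      Finset.sum_le_sum fun k _ => mul_le_of_le_one_left (by positivity) (hw _).2
    refine this.trans (le_of_eq ?_)
    rw [Fin.sum_univ_eq_sum_range (fun k => (3 : ℝ) ^ (-(k + 1 : ℤ))) n]
    clear this a
    induction n with
    | zero => simp
    | succ n ih =>
      rw [Finset.sum_range_succ, ih, zpow_neg]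
      have : (3 : ℝ) ^ ((n : ℤ) + 1) = 3 ^ (n + 1) := by
        rw [← zpow_natCast]; simp
      rw [this, pow_succ]
      field_simp
      ring

theorem support (t : ℝ) (ht : t ∈ Set.Icc (0 : ℝ) 1) (m : ℕ) (u : ℝ) (h : multFn t m u ≠ 0) :
    -((3 : ℝ) ^ m)⁻¹ ≤ u ∧ u ≤ 1 / 2 + ((3 : ℝ) ^ m)⁻¹ / 2 := by
  classical
  rw [multFn_eq] at h
  obtain ⟨a, -, ha⟩ := Finset.exists_ne_zero_of_sum_ne_zero h
  have ha' : |u - X t m a| ≤ ((3 : ℝ) ^ m)⁻¹ := by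
    by_contra hc
    simp [hc] at ha
  have := X_bounds t ht m a
  rw [abs_le] at ha'
  constructor <;> linarith

theorem multFn_le (t : ℝ) (n : ℕ) (s : ℝ) : multFn t n s ≤ 3 ^ n := by
  rw [multFn]
  refine (Finset.card_filter_le _ _).trans ?_
  simp

open scoped Classical in
noncomputable def W (t : ℝ) (m : ℕ) (s : ℝ) : Finset (Fin m → Fin 3) :=
  Finset.univ.filter fun a =>
    -(1 / 3) ≤ (3 : ℝ) ^ m * (s - X t m a) ∧ (3 : ℝ) ^ m * (s - X t m a) ≤ 2 / 3

theorem step (t : ℝ) (ht : t ∈ Set.Icc (0 : ℝ) 1) (m : ℕ) (s : ℝ) :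
    multFn t (m + 1) s ≤ 3 * (W t m s).card := by
  rw [split, ← Finset.sum_subset (Finset.subset_univ (W t m s))]
  · refine (Finset.sum_le_card_nsmul _ _ 3 fun a _ => (multFn_le _ _ _).trans (by norm_num)).trans ?_
    simp [mul_comm]
  · intro a _ ha
    by_contra hc
    have := support t ht _ _ hc
    apply ha
    simp only [W, Finset.mem_filter, Finset.mem_univ, true_and]
    norm_num at this ⊢
    exact this

def P (t K : ℝ) (n : ℕ) (s : ℝ) : Prop :=
  ∃ s' : ℝ, ⌊(3 : ℝ) ^ (n + 1) * s'⌋ = ⌊(3 : ℝ) ^ (n + 1) * s⌋ ∧ K < (W t n s').card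

def First (t K : ℝ) (n : ℕ) (s : ℝ) : Prop := P t K n s ∧ ∀ m < n, ¬ P t K m s

theorem floor_nest {n m : ℕ} (h : m ≤ n) {s s' : ℝ}
    (e : ⌊(3 : ℝ) ^ n * s⌋ = ⌊(3 : ℝ) ^ n * s'⌋) : ⌊(3 : ℝ) ^ m * s⌋ = ⌊(3 : ℝ) ^ m * s'⌋ := by
  obtain ⟨k, rfl⟩ := Nat.exists_eq_add_of_le h
  have key : ∀ u : ℝ, ⌊(3 : ℝ) ^ m * u⌋ = ⌊(3 : ℝ) ^ (m + k) * u⌋ / ((3 ^ k : ℕ) : ℤ) := by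
    intro u
    rw [← Int.floor_div_natCast]
    congr 1
    push_cast
    rw [pow_add]; field_simp
  rw [key, key, e]

theorem P_congr {t K : ℝ} {n : ℕ} {s s' : ℝ}
    (e : ⌊(3 : ℝ) ^ (n + 1) * s⌋ = ⌊(3 : ℝ) ^ (n + 1) * s'⌋) (h : P t K n s) : P t K n s' := by
  obtain ⟨u, hu, h⟩ := h
  exact ⟨u, hu.trans e, h⟩

theorem First_congr {t K : ℝ} {n : ℕ} {s s' : ℝ}
    (e : ⌊(3 : ℝ) ^ (n + 1) * s⌋ = ⌊(3 : ℝ) ^ (n + 1) * s'⌋) (h : First t K n s) :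
    First t K n s' :=
  ⟨P_congr e h.1, fun m hm hp => h.2 m hm (P_congr (floor_nest (by omega) e.symm) hp)⟩

theorem First_unique {t K : ℝ} {n m : ℕ} {s : ℝ} (h : First t K n s) (h' : First t K m s) :
    n = m := by
  rcases lt_trichotomy n m with hl | hl | hl
  · exact (h'.2 n hl h.1).elim
  · exact hl
  · exact (h.2 m hl h'.1).elim

theorem floor_close {n : ℕ} {s s' : ℝ}
    (e : ⌊(3 : ℝ) ^ n * s⌋ = ⌊(3 : ℝ) ^ n * s'⌋) : |3 ^ n * s - 3 ^ n * s'| < 1 :=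
  Int.abs_sub_lt_one_of_floor_eq_floor e

theorem le_star (t : ℝ) {N n : ℕ} (h : n ≤ N) (s : ℝ) : multFn t n s ≤ multFnStar t N s :=
  Finset.le_sup (f := fun n => multFn t n s) (by simp; omega)

theorem exists_of_star {t : ℝ} {N : ℕ} {s L : ℝ} (h : L < (multFnStar t N s : ℝ)) :
    ∃ n ≤ N, L < (multFn t n s : ℝ) := by
  obtain ⟨n, hn, e⟩ := Finset.exists_mem_eq_sup (Finset.range (N + 1)) ⟨0, by simp⟩
    (fun n => multFn t n s)
  refine ⟨n, by simp at hn; omega, ?_⟩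
  rw [multFnStar, e] at h
  exact h

theorem P_of {t K M : ℝ} (ht : t ∈ Set.Icc (0 : ℝ) 1) (hK : 1 ≤ K) (hM : 1 ≤ M) {p : ℕ} {s : ℝ}
    (h : 4 * K * M < (multFn t p s : ℝ)) : ∃ q, p = q + 1 ∧ P t K q s := by
  have hKM : K ≤ K * M := le_mul_of_one_le_right (by linarith) hM
  cases p with
  | zero =>
    have := multFn_le t 0 s
    have : (multFn t 0 s : ℝ) ≤ 1 := by exact_mod_cast this
    linarith
  | succ q =>
    refine ⟨q, rfl, s, rfl, ?_⟩
    have : (multFn t (q + 1) s : ℝ) ≤ 3 * (W t q s).card := by exact_mod_cast step t ht q s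
    linarith

theorem First_sub {t K : ℝ} {n : ℕ} {s : ℝ} (h : P t K n s) :
    K < (multFn t n s : ℝ) := by
  classical
  obtain ⟨u, hu, h⟩ := h
  refine h.trans_le ?_
  rw [multFn]
  refine Nat.cast_le.2 (Finset.card_le_card fun a ha => ?_)
  simp only [W, Finset.mem_filter, Finset.mem_univ, true_and] at ha ⊢
  have hc := floor_close hu
  have h3 : (0 : ℝ) < 3 ^ n := by positivity
  rw [zpow_neg, zpow_natCast, ← one_div, le_div_iff₀' h3, ← abs_of_pos h3, ← abs_mul]
  change |3 ^ n * (s - X t n a)| ≤ 1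
  rw [pow_succ] at hc
  rw [abs_lt] at hc
  rw [abs_le]
  constructor <;> nlinarith

theorem First_exists {t K : ℝ} {q : ℕ} {s : ℝ} (h : P t K q s) : ∃ n ≤ q, First t K n s := by
  classical
  have hh : ∃ n, P t K n s := ⟨q, h⟩
  exact ⟨Nat.find hh, Nat.find_min' hh h, Nat.find_spec hh, fun m hm => Nat.find_min hh hm⟩

theorem First_pos {t K : ℝ} (hK : 1 ≤ K) {n : ℕ} {s : ℝ} (h : P t K n s) : n ≠ 0 := by
  rintro rfl
  have h1 := First_sub h
  have := multFn_le t 0 s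
  have : (multFn t 0 s : ℝ) ≤ 1 := by exact_mod_cast this
  linarith

theorem local_incl {t K M : ℝ} (ht : t ∈ Set.Icc (0 : ℝ) 1) (hK : 1 ≤ K) (hM : 1 ≤ M) {N m : ℕ}
    {s s0 : ℝ} (h0 : First t K (m + 1) s0)
    (hs : ⌊(3 : ℝ) ^ (m + 2) * s⌋ = ⌊(3 : ℝ) ^ (m + 2) * s0⌋)
    (hF : 4 * K * M < (multFnStar t N s : ℝ)) :
    ∃ a ∈ W t m s0, M < (multFnStar t N (3 ^ m * (s - X t m a)) : ℝ) := by
  obtain ⟨p, hp, hF⟩ := exists_of_star hF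
  obtain ⟨q, rfl, hq⟩ := P_of ht hK hM hF
  have hfs : First t K (m + 1) s := First_congr hs.symm h0
  have hmq : m + 1 ≤ q := by
    by_contra hc
    exact hfs.2 q (by omega) hq
  have hW : ((W t m s0).card : ℝ) ≤ K := by
    by_contra hc
    exact h0.2 m (by omega) ⟨s0, rfl, not_le.1 hc⟩
  obtain ⟨k, rfl⟩ := Nat.exists_eq_add_of_le hmq
  have e : m + 1 + k + 1 = m + (k + 2) := by ring
  rw [e] at hF
  rw [split, ← Finset.sum_subset (Finset.subset_univ (W t m s0))] at hF
  · by_contra hc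
    push Not at hc
    have : ((∑ a ∈ W t m s0, multFn t (k + 2) (3 ^ m * (s - X t m a)) : ℕ) : ℝ)
        ≤ (W t m s0).card * M := by
      push_cast
      rw [← nsmul_eq_mul]
      refine Finset.sum_le_card_nsmul _ _ _ fun a ha => le_trans ?_ (hc a ha)
      exact_mod_cast le_star t (by omega) _
    nlinarith
  · intro a _ ha
    by_contra hc
    have h1 := support t ht _ _ hc
    apply ha
    simp only [W, Finset.mem_filter, Finset.mem_univ, true_and]
    have h9 : ((3 : ℝ) ^ (k + 2))⁻¹ ≤ 1 / 9 := by
      rw [← one_div]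
      apply one_div_le_one_div_of_le (by norm_num)
      have : (1 : ℝ) ≤ 3 ^ k := one_le_pow₀ (by norm_num)
      rw [pow_add]; linarith
    have hcl := floor_close hs
    rw [pow_add, abs_lt] at hcl
    constructor <;> nlinarith

theorem vol_scale (m : ℕ) (x : ℝ) (A : Set ℝ) :
    volume {s : ℝ | 3 ^ m * (s - x) ∈ A} = ENNReal.ofReal ((3 ^ m)⁻¹) * volume A := by
  have h3 : (0 : ℝ) < 3 ^ m := by positivity
  have : {s : ℝ | 3 ^ m * (s - x) ∈ A} = (fun s => s - x) ⁻¹' ((fun u => 3 ^ m * u) ⁻¹' A) := rfl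
  simp only [sub_eq_add_neg] at this ⊢
  rw [this, measure_preimage_add_right, Real.volume_preimage_mul_left h3.ne',
    abs_of_pos (by positivity)]

theorem cell_eq (n : ℕ) (j : ℤ) : {s : ℝ | ⌊(3 : ℝ) ^ n * s⌋ = j} =
    Set.Ico ((j : ℝ) / 3 ^ n) ((j + 1) / 3 ^ n) := by
  have h3 : (0 : ℝ) < 3 ^ n := by positivity
  ext s
  simp only [Set.mem_ofPred_eq, Int.floor_eq_iff, Set.mem_Ico]
  rw [div_le_iff₀' h3, lt_div_iff₀' h3]

theorem vol_cell (n : ℕ) (j : ℤ) :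
    volume {s : ℝ | ⌊(3 : ℝ) ^ n * s⌋ = j} = ENNReal.ofReal ((3 ^ n)⁻¹) := by
  rw [cell_eq, Real.volume_Ico]
  congr 1
  ring

theorem local_bound {t K M : ℝ} (ht : t ∈ Set.Icc (0 : ℝ) 1) (hK : 1 ≤ K) (hM : 1 ≤ M) {N m : ℕ}
    {s0 : ℝ} (h0 : First t K (m + 1) s0) :
    volume ({s : ℝ | 4 * K * M < (multFnStar t N s : ℝ)} ∩
      {s : ℝ | ⌊(3 : ℝ) ^ (m + 2) * s⌋ = ⌊(3 : ℝ) ^ (m + 2) * s0⌋}) ≤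
    ENNReal.ofReal (9 * K) * volume {s : ℝ | M < (multFnStar t N s : ℝ)} *
      volume {s : ℝ | ⌊(3 : ℝ) ^ (m + 2) * s⌋ = ⌊(3 : ℝ) ^ (m + 2) * s0⌋} := by
  have hW : ((W t m s0).card : ℝ) ≤ K := by
    by_contra hc
    exact h0.2 m (by omega) ⟨s0, rfl, not_le.1 hc⟩
  set A := {s : ℝ | M < (multFnStar t N s : ℝ)} with hA
  calc _ ≤ volume (⋃ a ∈ W t m s0, {s : ℝ | 3 ^ m * (s - X t m a) ∈ A}) := by
        apply measure_mono
        rintro s ⟨h1, h2⟩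
        obtain ⟨a, ha, h⟩ := local_incl ht hK hM h0 h2 h1
        exact Set.mem_biUnion ha h
    _ ≤ ∑ a ∈ W t m s0, volume {s : ℝ | 3 ^ m * (s - X t m a) ∈ A} :=
        measure_biUnion_finset_le _ _
    _ = (W t m s0).card * (ENNReal.ofReal ((3 ^ m)⁻¹) * volume A) := by
        simp only [vol_scale, Finset.sum_const, nsmul_eq_mul]
    _ ≤ ENNReal.ofReal K * (ENNReal.ofReal ((3 ^ m)⁻¹) * volume A) := by
        gcongr
        rw [← ENNReal.ofReal_natCast]
        exact ENNReal.ofReal_le_ofReal hW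
    _ = _ := by
        rw [vol_cell, mul_right_comm, ← mul_assoc, ← ENNReal.ofReal_mul (by linarith),
          ← ENNReal.ofReal_mul (by linarith)]
        congr 2
        rw [pow_add]; field_simp; norm_num

end LSS

open LSS in
/-- Submultiplicativity of level sets of the maximal multiplicity function:
`|F_{4KM}| ≤ C·K·|F_K|·|F_M|` where `F_L = {f_N^* > L}`. -/
theorem level_set_submultiplicative :
    ∃ C > (0:ℝ), ∀ t ∈ Set.Icc (0:ℝ) 1, ∀ N : ℕ, ∀ K M : ℝ, 1 ≤ K → 1 ≤ M →
      volume {s : ℝ | 4 * K * M < (multFnStar t N s : ℝ)} ≤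
        ENNReal.ofReal (C * K) *
          volume {s : ℝ | K < (multFnStar t N s : ℝ)} *
          volume {s : ℝ | M < (multFnStar t N s : ℝ)} := by
  refine ⟨9, by norm_num, fun t ht N K M hK hM => ?_⟩
  set F := {s : ℝ | 4 * K * M < (multFnStar t N s : ℝ)} with hF
  set A := {s : ℝ | M < (multFnStar t N s : ℝ)} with hA
  set B := {s : ℝ | K < (multFnStar t N s : ℝ)} with hB
  let S : Set (ℕ × ℤ) := {q | ∃ s, q.1 ≤ N ∧ First t K q.1 s ∧ ⌊(3 : ℝ) ^ (q.1 + 1) * s⌋ = q.2}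
  let Q : ℕ × ℤ → Set ℝ := fun q => {s : ℝ | ⌊(3 : ℝ) ^ (q.1 + 1) * s⌋ = q.2}
  have hQF : ∀ q ∈ S, ∀ s ∈ Q q, First t K q.1 s := by
    rintro q ⟨u, -, hu, e⟩ s hs
    exact First_congr (e.trans (Eq.symm hs)) hu
  have hcov : F ⊆ ⋃ q : S, F ∩ Q q := by
    intro s hs
    obtain ⟨p, hp, hFp⟩ := exists_of_star (show 4 * K * M < (multFnStar t N s : ℝ) from hs)
    obtain ⟨q, rfl, hq⟩ := P_of ht hK hM hFp
    obtain ⟨n, hn, hf⟩ := First_exists hq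
    exact Set.mem_iUnion.2 ⟨⟨(n, ⌊(3 : ℝ) ^ (n + 1) * s⌋), s, by simp only; omega, hf, rfl⟩, hs, rfl⟩
  have hsub : (⋃ q : S, Q q) ⊆ B := by
    intro s hs
    obtain ⟨⟨q, hq⟩, hs⟩ := Set.mem_iUnion.1 hs
    have h1 := First_sub (hQF q hq s hs).1
    obtain ⟨u, hN, -⟩ := hq
    exact h1.trans_le (by exact_mod_cast le_star t hN s)
  have hdis : Pairwise (Function.onFun Disjoint fun q : S => Q q) := by
    rintro ⟨⟨n, i⟩, hq⟩ ⟨⟨n', i'⟩, hq'⟩ hne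
    refine Set.disjoint_left.2 fun s hs hs' => hne ?_
    have e : n = n' := First_unique (hQF _ hq s hs) (hQF _ hq' s hs')
    subst e
    have : i = i' := (Eq.symm hs).trans hs'
    subst this
    rfl
  have hmeas : ∀ q : S, MeasurableSet (Q q) := by
    intro q
    simp only [Q, cell_eq]
    exact measurableSet_Ico
  calc volume F ≤ volume (⋃ q : S, F ∩ Q q) := measure_mono hcov
    _ ≤ ∑' q : S, volume (F ∩ Q q) := measure_iUnion_le _
    _ ≤ ∑' q : S, ENNReal.ofReal (9 * K) * volume A * volume (Q q) := by
        refine ENNReal.tsum_le_tsum ?_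
        rintro ⟨⟨n, i⟩, s0, hn, hf, e⟩
        obtain ⟨m, rfl⟩ := Nat.exists_eq_succ_of_ne_zero (First_pos hK hf.1)
        simp only at e
        subst e
        exact local_bound ht hK hM hf
    _ = ENNReal.ofReal (9 * K) * volume A * volume (⋃ q : S, Q q) := by
        rw [ENNReal.tsum_mul_left, measure_iUnion hdis hmeas]
    _ ≤ ENNReal.ofReal (9 * K) * volume A * volume B := by
        gcongr
    _ = _ := by ring
end

section
/- For every real t ∈ [0,1] there is no z ∈ ℂ satisfying simultaneously 1 + e^{-itz} + e^{-iz} = 0 and t·e^{-itz} + e^{-iz} = 0. (In other words, φ̃_t has no branch points for real t ∈ [0,1]: φ̃_t(z) and its z-derivative never vanish simultaneously.) -/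
/-- For real `t ∈ [0,1]`, `φ̃_t(z) = 1 + e^{-itz} + e^{-iz}` and its `z`-derivative
(up to the factor `-i`, i.e. `t e^{-itz} + e^{-iz}`) never vanish simultaneously:
there are no branch points over real parameters. -/
theorem phiTilde_no_real_branch_points :
    ∀ t ∈ Set.Icc (0:ℝ) 1,
      ¬ ∃ z : ℂ,
        1 + Complex.exp (-Complex.I * (t : ℂ) * z) + Complex.exp (-Complex.I * z) = 0 ∧
        (t : ℂ) * Complex.exp (-Complex.I * (t : ℂ) * z) + Complex.exp (-Complex.I * z) = 0 := by
  rintro t ⟨h0, h1⟩ ⟨z, hA, hB⟩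
  have e1 : (((1 - t : ℝ)) : ℂ) * Complex.exp (-Complex.I * (t : ℂ) * z) = -1 := by
    push_cast
    linear_combination hA - hB
  have e2 : Complex.exp (-Complex.I * z) = -((t : ℂ) * Complex.exp (-Complex.I * (t : ℂ) * z)) := by
    linear_combination hB
  have n1 := congrArg norm e1
  have n2 := congrArg norm e2
  rw [norm_mul, Complex.norm_real, Complex.norm_exp, Real.norm_of_nonneg (by linarith)] at n1
  rw [norm_neg, norm_mul, Complex.norm_real, Complex.norm_exp, Complex.norm_exp,
    Real.norm_of_nonneg h0] at n2
  have r1 : (-Complex.I * (t : ℂ) * z).re = t * z.im := by simp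
  have r2 : (-Complex.I * z).re = z.im := by simp
  rw [r1] at n1 n2
  rw [r2] at n2
  rw [norm_neg, norm_one] at n1
  have p1 := Real.exp_pos (t * z.im)
  have p2 := Real.exp_pos z.im
  have ht0 : 0 < t := by
    rcases h0.eq_or_lt with h | h
    · rw [← h] at n2
      simp at n2
    · exact h
  have ht1 : t < 1 := by
    rcases h1.eq_or_lt with h | h
    · rw [h] at n1
      simp at n1
    · exact h
  have g1 : 1 < Real.exp (t * z.im) := by nlinarith
  have g2 : 0 < t * z.im := by simpa using g1
  have g3 : 0 < z.im := pos_of_mul_pos_right g2 h0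
  have g4 : Real.exp z.im < Real.exp (t * z.im) := by nlinarith
  have g5 := Real.exp_lt_exp.1 g4
  nlinarith
end

section
/- There is an absolute constant C > 0 such that for all integers a ≤ b and all real numbers x, x_0 with |x − x_0| ≤ 3^a, one has ∏_{k=a}^{b} (7 + 2cos(3^{-k} x_0)) ≤ C · ∏_{k=a}^{b} (7 + 2cos(3^{-k} x)). Equivalently, with r(x) := (7 + 2cos x)/9 and R(x) := ∏_{k=a}^{b} r(3^{-k} x), the values R(x) for x ranging over any interval of radius 3^a are comparable with an absolute comparability constant. -/
lemma cos_lip_aux (u v : ℝ) : Real.cos u - Real.cos v ≤ |v - u| := by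
  rw [Real.cos_sub_cos]
  have h1 := Real.abs_sin_le_one ((u+v)/2)
  have h2 : |Real.sin ((u-v)/2)| ≤ |(u-v)/2| := Real.abs_sin_le_abs
  have h3 : |(u-v)/2| = |v-u|/2 := by rw [abs_div, abs_sub_comm]; norm_num
  have h4 : |Real.sin ((u+v)/2)| * |Real.sin ((u-v)/2)| ≤ 1 * (|v-u|/2) :=
    mul_le_mul h1 (h3 ▸ h2) (abs_nonneg _) zero_le_one
  rw [← abs_mul] at h4
  have h5 := neg_abs_le (Real.sin ((u+v)/2) * Real.sin ((u-v)/2))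
  nlinarith

lemma factor_aux (u v t : ℝ) (h : |v - u| ≤ t) :
    7 + 2 * Real.cos u ≤ Real.exp t * (7 + 2 * Real.cos v) := by
  have h1 := cos_lip_aux u v
  have h2 := Real.add_one_le_exp t
  have h3 := Real.neg_one_le_cos v
  have h4 : 0 ≤ t := (abs_nonneg _).trans h
  nlinarith [mul_le_mul_of_nonneg_right h2 (by linarith : 0 ≤ 7 + 2 * Real.cos v),
    mul_nonneg h4 (by linarith : 0 ≤ Real.cos v + 1)]

lemma factor_aux' (a k : ℤ) (x x₀ : ℝ) (h : |x - x₀| ≤ (3:ℝ) ^ a) :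
    7 + 2 * Real.cos ((3:ℝ) ^ (-k) * x₀) ≤
      Real.exp ((3:ℝ) ^ (a - k)) * (7 + 2 * Real.cos ((3:ℝ) ^ (-k) * x)) := by
  apply factor_aux
  have hp : (0:ℝ) < (3:ℝ) ^ (-k) := by positivity
  rw [← mul_sub, abs_mul, abs_of_pos hp, sub_eq_add_neg a k, zpow_add₀ (by norm_num), mul_comm]
  exact mul_le_mul_of_nonneg_right h hp.le

/-- Uniform comparability of the Riesz products
`∏_{k=a}^{b} (7 + 2cos(3^{-k}·))` over intervals of radius `3^a`. -/
theorem riesz_product_comparable :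
    ∃ C > (0:ℝ), ∀ a b : ℤ, a ≤ b → ∀ x x₀ : ℝ, |x - x₀| ≤ (3:ℝ) ^ a →
      ∏ k ∈ Finset.Icc a b, (7 + 2 * Real.cos ((3:ℝ) ^ (-k) * x₀)) ≤
        C * ∏ k ∈ Finset.Icc a b, (7 + 2 * Real.cos ((3:ℝ) ^ (-k) * x)) := by
  refine ⟨Real.exp (3/2), Real.exp_pos _, ?_⟩
  intro a b hab x x₀ h
  have pos : ∀ y : ℝ, 0 ≤ 7 + 2 * Real.cos y := fun y => by
    linarith [Real.neg_one_le_cos y]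
  have key : ∏ k ∈ Finset.Icc a b, (7 + 2 * Real.cos ((3:ℝ) ^ (-k) * x₀)) ≤
      Real.exp (3/2 - (3:ℝ) ^ (a - b) / 2) *
        ∏ k ∈ Finset.Icc a b, (7 + 2 * Real.cos ((3:ℝ) ^ (-k) * x)) := by
    induction b, hab using Int.le_induction with
    | base =>
      have := factor_aux' a a x x₀ h
      simp only [Finset.Icc_self, Finset.prod_singleton]
      convert this using 3
      rw [sub_self, zpow_zero]; norm_num
    | succ n hn ih =>
      have e : Finset.Icc a (n+1) = insert (n+1) (Finset.Icc a n) := by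
        ext; simp; omega
      have hni : n + 1 ∉ Finset.Icc a n := by simp
      rw [e, Finset.prod_insert hni, Finset.prod_insert hni]
      have h1 := mul_le_mul (factor_aux' a (n+1) x x₀ h) ih
        (Finset.prod_nonneg fun k _ => pos _) (mul_nonneg (Real.exp_pos _).le (pos _))
      refine h1.trans (le_of_eq ?_)
      have e2 : (3:ℝ) ^ (a - n) = 3 * (3:ℝ) ^ (a - (n+1)) := by
        rw [← zpow_one_add₀ (by norm_num)]; congr 1; ring
      have e3 : 3/2 - (3:ℝ) ^ (a - (n+1)) / 2
          = (3:ℝ) ^ (a - (n+1)) + (3/2 - (3:ℝ) ^ (a - n) / 2) := by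
        rw [e2]; ring
      rw [e3, Real.exp_add]; ring
  refine key.trans (mul_le_mul_of_nonneg_right ?_ (Finset.prod_nonneg fun k _ => pos _))
  apply Real.exp_le_exp.2
  have : (0:ℝ) < (3:ℝ) ^ (a - b) := by positivity
  linarith
end
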